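/- arXiv:1806.11069 — 10 statements merged into one kernel-verified Lean document; each statement's English description precedes it below -/
import Mathlib

section
/- Let K be a centrally symmetric convex body in ℝ^d (a compact convex set with nonempty interior satisfying K = −K), let λ ≥ 1 be a real number, and let v_1, …, v_n be pairwise distinct points of ℝ^d such that for all i ≠ j the gauge (Minkowski functional) of K satisfies 1 ≤ gauge K (v_i − v_j) ≤ λ. Then n ≤ (λ + 1)^d. -/
/-!
The balls `v i + ½ K°` of the gauge (`K°` the interior of `K`) are pairwise disjoint, so their
union `A` has volume `n 2⁻ᵈ vol K°`. Two points of `A` differ by a vector of gauge less than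
`l + 1`, hence all midpoints of a point of `A` and a point of `-A` lie in the gauge ball of radius
`(l + 1) / 2`. Brunn–Minkowski for `A` and `-A` (which have the same volume) bounds `vol A` by the
volume `((l + 1) / 2)ᵈ vol K°` of that ball. Comparing the two gives the claim.

Brunn–Minkowski is used in the multiplicative form `vol A * vol B ≤ (vol C)²`, where `C` contains
all midpoints of `A` and `B` (`brunnMinkowski_mul`). It is proved by induction on the dimension:
slicing along the first coordinate, the induction hypothesis says that the section volumes satisfy
the hypothesis of the one-dimensional Prékopa–Leindler inequality (`prekopaLeindler_real`), which
in turn follows from the additive inequality on the line (`volume_add_le_of_midpoint`) applied to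
superlevel sets.
-/

open Pointwise

open MeasureTheory

/-! ### Midpoint inequalities on the line -/

/-- For compact `A`, `B`, translating by the minimum of `B` and the maximum of `A` yields two half
size copies of `A` and `B` inside `C` that meet in a single point. -/
lemma volume_add_le_of_midpoint_compact {A B C : Set ℝ} (hA : IsCompact A) (hB : IsCompact B)
    (hA0 : A.Nonempty) (hB0 : B.Nonempty) (hC : ∀ x ∈ A, ∀ y ∈ B, (x + y) / 2 ∈ C) :
    volume A + volume B ≤ 2 * volume C := by
  obtain ⟨a, haA, ha⟩ := hA.exists_isGreatest hA0
  obtain ⟨b, hbB, hb⟩ := hB.exists_isLeast hB0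
  -- Doubling `C` turns the two half size copies into the translates `A + b` and `B + a`.
  set D : Set ℝ := (fun x => 2⁻¹ * x) ⁻¹' C with hD
  have hDvol : volume D = 2 * volume C := by
    rw [hD, Real.volume_preimage_mul_left (by norm_num)]
    norm_num
  rw [← hDvol]
  set A' : Set ℝ := (fun x => x + (-b)) ⁻¹' A with hA'
  set B' : Set ℝ := (fun x => x + (-a)) ⁻¹' B with hB'
  have h1 : volume A' = volume A := measure_preimage_add_right _ _ _
  have h2 : volume B' = volume B := measure_preimage_add_right _ _ _
  have hBm : MeasurableSet B' := (measurable_id.add_const (-a)) hB.measurableSet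
  have hdis : AEDisjoint volume A' B' := by
    refine measure_mono_null (t := {a + b}) ?_ (by simp)
    rintro x ⟨hx1, hx2⟩
    have := ha hx1
    have := hb hx2
    simp only [Set.mem_singleton_iff]
    linarith
  rw [← h1, ← h2, ← measure_union₀ hBm.nullMeasurableSet hdis]
  refine measure_mono ?_
  rintro x (hx | hx)
  · have := hC _ hx _ hbB
    simp only [hD, Set.mem_preimage]
    convert this using 1
    ring
  · have := hC _ haA _ hx
    simp only [hD, Set.mem_preimage]
    convert this using 1
    ring

lemma volume_add_le_of_midpoint {A B C : Set ℝ} (hA : MeasurableSet A) (hB : MeasurableSet B)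
    (hA0 : A.Nonempty) (hB0 : B.Nonempty) (hC : ∀ x ∈ A, ∀ y ∈ B, (x + y) / 2 ∈ C) :
    volume A + volume B ≤ 2 * volume C := by
  -- Empty compact subsets are replaced by singletons, which have the same measure.
  have key : ∀ {S : Set ℝ}, S.Nonempty → ∀ K, K ⊆ S → IsCompact K →
      ∃ K', K' ⊆ S ∧ IsCompact K' ∧ K'.Nonempty ∧ volume K ≤ volume K' := by
    intro S ⟨s, hs⟩ K hK hKc
    rcases K.eq_empty_or_nonempty with rfl | hne
    · exact ⟨{s}, by simpa using hs, isCompact_singleton, by simp, by simp⟩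
    · exact ⟨K, hK, hKc, hne, le_rfl⟩
  have inner : ∀ {S : Set ℝ}, MeasurableSet S →
      volume S = ⨆ K, ⨆ _ : K ⊆ S ∧ IsCompact K, volume K := fun hS => by
    simp only [iSup_and, ← hS.measure_eq_iSup_isCompact]
  rw [inner hA, inner hB]
  refine ENNReal.biSup_add_biSup_le' ⟨∅, by simp⟩ ⟨∅, by simp⟩ fun K hK L hL => ?_
  obtain ⟨K', hK1, hK2, hK3, hK4⟩ := key hA0 K hK.1 hK.2
  obtain ⟨L', hL1, hL2, hL3, hL4⟩ := key hB0 L hL.1 hL.2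
  exact (add_le_add hK4 hL4).trans (volume_add_le_of_midpoint_compact hK2 hL2 hK3 hL3
    fun x hx y hy => hC x (hK1 hx) y (hL1 hy))

/-- The case of suprema equal to `1` of the Prékopa–Leindler inequality on the line, in a stronger
additive form. -/
lemma prekopaLeindler_real_normalized {f g h : ℝ → ℝ} (hf : Measurable f) (hg : Measurable g)
    (hh : Measurable h) (hf0 : ∀ x, 0 ≤ f x) (hg0 : ∀ x, 0 ≤ g x) (hh0 : ∀ x, 0 ≤ h x)
    (hf1 : ∀ x, f x ≤ 1) (hg1 : ∀ x, g x ≤ 1)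
    (hf2 : ∀ t < 1, ∃ x, t < f x) (hg2 : ∀ t < 1, ∃ x, t < g x)
    (H : ∀ x y, f x * g y ≤ h ((x + y) / 2) ^ 2) :
    (∫⁻ x, ENNReal.ofReal (f x)) + ∫⁻ x, ENNReal.ofReal (g x)
      ≤ 2 * ∫⁻ x, ENNReal.ofReal (h x) := by
  rw [lintegral_eq_lintegral_meas_lt _ (ae_of_all _ hf0) hf.aemeasurable,
    lintegral_eq_lintegral_meas_lt _ (ae_of_all _ hg0) hg.aemeasurable,
    lintegral_eq_lintegral_meas_lt _ (ae_of_all _ hh0) hh.aemeasurable]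
  have mono : ∀ u : ℝ → ℝ, Measurable fun t : ℝ => volume {a | t < u a} := fun u =>
    Antitone.measurable fun s t hst => measure_mono fun x hx => lt_of_le_of_lt hst hx
  rw [← lintegral_add_left (mono f), ← lintegral_const_mul _ (mono h)]
  refine setLIntegral_mono ((mono h).const_mul _) fun t ht => ?_
  rcases lt_or_ge t 1 with ht1 | ht1
  · refine volume_add_le_of_midpoint (measurableSet_lt measurable_const hf)
      (measurableSet_lt measurable_const hg) (hf2 t ht1) (hg2 t ht1) fun x hx y hy => ?_
    have hx' : t < f x := hx
    have hy' : t < g y := hy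
    have ht' : (0 : ℝ) < t := ht
    have := H x y
    exact lt_of_pow_lt_pow_left₀ 2 (hh0 _) (by nlinarith)
  · have e1 : {a | t < f a} = ∅ := Set.eq_empty_of_forall_notMem fun x hx =>
      absurd (lt_of_le_of_lt ht1 hx) (hf1 x).not_gt
    have e2 : {a | t < g a} = ∅ := Set.eq_empty_of_forall_notMem fun x hx =>
      absurd (lt_of_le_of_lt ht1 hx) (hg1 x).not_gt
    simp [e1, e2]

lemma ENNReal.mul_le_sq_of_add_le {a b c : ENNReal} (h : a + b ≤ 2 * c) : a * b ≤ c ^ 2 := by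
  rcases eq_or_ne c ⊤ with rfl | hc
  · simp
  have hab : a + b ≠ ⊤ := ne_top_of_le_ne_top (ENNReal.mul_ne_top (by simp) hc) h
  lift c to NNReal using hc
  lift a to NNReal using (ENNReal.add_ne_top.1 hab).1
  lift b to NNReal using (ENNReal.add_ne_top.1 hab).2
  have h' : (a : ℝ) + b ≤ 2 * c := by exact_mod_cast h
  have : (a : ℝ) * b ≤ c ^ 2 := by nlinarith [sq_nonneg ((a : ℝ) - b), a.2, b.2, c.2]
  exact_mod_cast this

/-- The Prékopa–Leindler inequality on the line, with weights `½`, for bounded functions. -/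
lemma prekopaLeindler_real {f g h : ℝ → ℝ} (hf : Measurable f) (hg : Measurable g)
    (hh : Measurable h) (hf0 : ∀ x, 0 ≤ f x) (hg0 : ∀ x, 0 ≤ g x) (hh0 : ∀ x, 0 ≤ h x)
    (hf1 : BddAbove (Set.range f)) (hg1 : BddAbove (Set.range g))
    (H : ∀ x y, f x * g y ≤ h ((x + y) / 2) ^ 2) :
    (∫⁻ x, ENNReal.ofReal (f x)) * ∫⁻ x, ENNReal.ofReal (g x)
      ≤ (∫⁻ x, ENNReal.ofReal (h x)) ^ 2 := by
  set M := ⨆ x, f x with hM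
  set N := ⨆ x, g x with hN
  have hfM : ∀ x, f x ≤ M := fun x => le_ciSup hf1 x
  have hgN : ∀ x, g x ≤ N := fun x => le_ciSup hg1 x
  rcases (le_trans (hf0 0) (hfM 0)).eq_or_lt with hM0 | hM0
  · have : ∀ x, f x = 0 := fun x => le_antisymm (hM0 ▸ hfM x) (hf0 x)
    simp [this]
  rcases (le_trans (hg0 0) (hgN 0)).eq_or_lt with hN0 | hN0
  · have : ∀ x, g x = 0 := fun x => le_antisymm (hN0 ▸ hgN x) (hg0 x)
    simp [this]
  set P := √(M * N) with hP
  have hP0 : 0 < P := Real.sqrt_pos.2 (mul_pos hM0 hN0)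
  have hP2 : P ^ 2 = M * N := Real.sq_sqrt (mul_pos hM0 hN0).le
  have scale : ∀ {u : ℝ → ℝ} {c : ℝ}, 0 < c → Measurable u →
      ∫⁻ x, ENNReal.ofReal (u x) = ENNReal.ofReal c * ∫⁻ x, ENNReal.ofReal (u x / c) := by
    intro u c hc hu
    rw [← lintegral_const_mul _ (hu.div_const c).ennreal_ofReal]
    refine lintegral_congr fun x => ?_
    rw [← ENNReal.ofReal_mul hc.le, mul_div_cancel₀ _ hc.ne']
  have main := prekopaLeindler_real_normalized (hf.div_const M) (hg.div_const N)
    (hh.div_const P) (fun x => div_nonneg (hf0 x) hM0.le) (fun x => div_nonneg (hg0 x) hN0.le)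
    (fun x => div_nonneg (hh0 x) hP0.le) (fun x => (div_le_one hM0).2 (hfM x))
    (fun x => (div_le_one hN0).2 (hgN x))
    (fun t ht => by
      obtain ⟨x, hx⟩ := exists_lt_of_lt_ciSup (show t * M < ⨆ x, f x by rw [← hM]; nlinarith)
      exact ⟨x, (lt_div_iff₀ hM0).2 hx⟩)
    (fun t ht => by
      obtain ⟨x, hx⟩ := exists_lt_of_lt_ciSup (show t * N < ⨆ x, g x by rw [← hN]; nlinarith)
      exact ⟨x, (lt_div_iff₀ hN0).2 hx⟩)
    (fun x y => by
      rw [div_mul_div_comm, div_pow, hP2]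
      exact div_le_div_of_nonneg_right (H x y) (mul_pos hM0 hN0).le)
  rw [scale hM0 hf, scale hN0 hg, scale hP0 hh, mul_mul_mul_comm, mul_pow,
    ← ENNReal.ofReal_mul hM0.le, ← ENNReal.ofReal_pow hP0.le, hP2]
  gcongr
  exact ENNReal.mul_le_sq_of_add_le main

/-! ### The Brunn–Minkowski inequality -/

/-- The section of a set at first coordinate `s`. -/
def slice {d : ℕ} (A : Set (Fin (d + 1) → ℝ)) (s : ℝ) : Set (Fin d → ℝ) :=
  {y | (Fin.cons s y : Fin (d + 1) → ℝ) ∈ A}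

section slice

variable {d : ℕ} {A : Set (Fin (d + 1) → ℝ)}

lemma measurableSet_uncurry_slice (hA : MeasurableSet A) :
    MeasurableSet {p : ℝ × (Fin d → ℝ) | p.2 ∈ slice A p.1} := by
  have := (MeasurableEquiv.piFinSuccAbove (fun _ : Fin (d + 1) => ℝ) 0).symm.measurable hA
  simpa [Fin.insertNthEquiv, Set.preimage, slice] using this

lemma measurableSet_slice (hA : MeasurableSet A) (s : ℝ) : MeasurableSet (slice A s) :=
  measurable_prodMk_left (measurableSet_uncurry_slice hA)

lemma measurable_volume_slice (hA : MeasurableSet A) :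
    Measurable fun s => volume (slice A s) :=
  measurable_measure_prodMk_left (measurableSet_uncurry_slice hA)

lemma volume_eq_lintegral_slice (hA : MeasurableSet A) :
    volume A = ∫⁻ s : ℝ, volume (slice A s) := by
  have e := (volume_preserving_piFinSuccAbove (fun _ : Fin (d + 1) => ℝ) 0).symm
  rw [← e.measure_preimage_equiv, Measure.volume_eq_prod,
    Measure.prod_apply (by exact (MeasurableEquiv.measurable _) hA)]
  simp [Fin.insertNthEquiv, Set.preimage, slice]

lemma slice_norm_le {R : ℝ} (hR : ∀ x ∈ A, ‖x‖ ≤ R) (s : ℝ) : ∀ y ∈ slice A s, ‖y‖ ≤ R := by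
  intro y hy
  have h1 := hR _ hy
  have hR0 := (norm_nonneg _).trans h1
  refine (pi_norm_le_iff_of_nonneg hR0).2 fun i => ?_
  simpa using (pi_norm_le_iff_of_nonneg hR0).1 h1 i.succ

lemma volume_slice_le {R : ℝ} (hR : ∀ x ∈ A, ‖x‖ ≤ R) (s : ℝ) :
    volume (slice A s) ≤ volume (Metric.closedBall (0 : Fin d → ℝ) R) :=
  measure_mono fun y hy => by simpa using slice_norm_le hR s y hy

end slice

/-- The Brunn–Minkowski inequality in multiplicative form, for bounded measurable sets. -/
theorem brunnMinkowski_mul {d : ℕ} {A B C : Set (Fin d → ℝ)} {R : ℝ}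
    (hA : MeasurableSet A) (hB : MeasurableSet B) (hC : MeasurableSet C)
    (hAR : ∀ x ∈ A, ‖x‖ ≤ R) (hBR : ∀ x ∈ B, ‖x‖ ≤ R) (hCR : ∀ x ∈ C, ‖x‖ ≤ R)
    (H : ∀ x ∈ A, ∀ y ∈ B, (2⁻¹ : ℝ) • (x + y) ∈ C) :
    volume A * volume B ≤ volume C ^ 2 := by
  induction d with
  | zero =>
    rcases A.eq_empty_or_nonempty with rfl | ⟨a, ha⟩
    · simp
    rcases B.eq_empty_or_nonempty with rfl | ⟨b, hb⟩
    · simp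
    have e : ∀ {S : Set (Fin 0 → ℝ)} {x}, x ∈ S → S = {x} := fun {S x} hx =>
      Set.eq_singleton_iff_unique_mem.2 ⟨hx, fun y _ => Subsingleton.elim _ _⟩
    have vol : ∀ x : Fin 0 → ℝ, volume ({x} : Set (Fin 0 → ℝ)) = 1 := fun x => by
      simp [volume_pi, Measure.pi_of_empty (x := x)]
    rw [e ha, e hb, e (H a ha b hb)]
    simp [vol]
  | succ d ih =>
    have hfin : ∀ {S : Set (Fin (d + 1) → ℝ)}, (∀ x ∈ S, ‖x‖ ≤ R) → ∀ s,
        volume (slice S s) ≠ ⊤ := fun hS s =>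
      ne_top_of_le_ne_top measure_closedBall_lt_top.ne (volume_slice_le hS s)
    have hint : ∀ {S : Set (Fin (d + 1) → ℝ)}, MeasurableSet S → (∀ x ∈ S, ‖x‖ ≤ R) →
        volume S = ∫⁻ s, ENNReal.ofReal (volume (slice S s)).toReal := fun hS hSR => by
      rw [volume_eq_lintegral_slice hS]
      exact lintegral_congr fun s => (ENNReal.ofReal_toReal (hfin hSR s)).symm
    have hbdd : ∀ {S : Set (Fin (d + 1) → ℝ)}, (∀ x ∈ S, ‖x‖ ≤ R) →
        BddAbove (Set.range fun s => (volume (slice S s)).toReal) := fun hS => by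
      refine ⟨(volume (Metric.closedBall (0 : Fin d → ℝ) R)).toReal, ?_⟩
      rintro _ ⟨s, rfl⟩
      exact ENNReal.toReal_mono measure_closedBall_lt_top.ne (volume_slice_le hS s)
    rw [hint hA hAR, hint hB hBR, hint hC hCR]
    refine prekopaLeindler_real (measurable_volume_slice hA).ennreal_toReal
      (measurable_volume_slice hB).ennreal_toReal (measurable_volume_slice hC).ennreal_toReal
      (fun _ => ENNReal.toReal_nonneg) (fun _ => ENNReal.toReal_nonneg)
      (fun _ => ENNReal.toReal_nonneg) (hbdd hAR) (hbdd hBR) fun s t => ?_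
    rw [← ENNReal.toReal_mul, ← ENNReal.toReal_pow]
    refine ENNReal.toReal_mono (ENNReal.pow_ne_top (hfin hCR _)) ?_
    refine ih (measurableSet_slice hA s) (measurableSet_slice hB t) (measurableSet_slice hC _)
      (slice_norm_le hAR s) (slice_norm_le hBR t) (slice_norm_le hCR _) fun x hx y hy => ?_
    have := H _ hx _ hy
    simp only [slice, Set.mem_ofPred_eq]
    convert this using 1
    ext i
    refine Fin.cases ?_ (fun j => ?_) i
    · simp; ring
    · simp; ring

/-! ### Packing gauge balls -/

/-- If `K` is a centrally symmetric convex body in `ℝ^d`, `λ ≥ 1`, and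
`v 1, …, v n` are pairwise distinct points with `1 ≤ gauge K (v i - v j) ≤ λ`
for all `i ≠ j`, then `n ≤ (λ + 1)^d`. -/
theorem stmt0 {d n : ℕ} (K : Set (Fin d → ℝ))
    (hKcomp : IsCompact K) (hKconv : Convex ℝ K)
    (hKint : (interior K).Nonempty) (hKsymm : K = -K)
    (l : ℝ) (hl : 1 ≤ l)
    (v : Fin n → (Fin d → ℝ)) (hinj : Function.Injective v)
    (h : ∀ i j : Fin n, i ≠ j →
      1 ≤ gauge K (v i - v j) ∧ gauge K (v i - v j) ≤ l) :
    (n : ℝ) ≤ (l + 1) ^ d := by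
  have hsymm : ∀ x ∈ K, -x ∈ K := fun x hx => by rw [hKsymm] at hx; exact hx
  have hK0 : K ∈ nhds (0 : Fin d → ℝ) := by
    obtain ⟨x, hx⟩ := hKint
    have := hKconv.add_smul_mem_interior (x := -x) (y := (2 : ℝ) • x)
      (hsymm x (interior_subset hx)) (by convert hx using 1; module) (t := 2⁻¹) (by norm_num)
    rw [mem_interior_iff_mem_nhds] at this
    convert this using 2
    module
  have habs := absorbent_nhds_zero (𝕜 := ℝ) hK0
  have hcont := continuous_gauge hKconv hK0
  have hneg : ∀ x, gauge K (-x) = gauge K x := gauge_neg hsymm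
  have hadd : ∀ x y, gauge K (x + y) ≤ gauge K x + gauge K y := gauge_add_le hKconv habs
  have hsmul : ∀ (c : ℝ), 0 ≤ c → ∀ x, gauge K (c • x) = c * gauge K x := fun c hc x => by
    simpa using gauge_smul_of_nonneg (s := K) hc x
  obtain ⟨r, hr0, hr⟩ := hKcomp.isBounded.exists_pos_norm_le
  -- Sets bounded for the gauge are bounded in norm.
  have hbd : ∀ c x, gauge K x < c → ‖x‖ ≤ c * r := fun c x hx => by
    obtain ⟨b, hb0, hbc, y, hy, rfl⟩ := exists_lt_of_gauge_lt habs hx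
    have := hr y hy
    have hc0 := (hb0.trans hbc).le
    simp only [norm_smul, Real.norm_eq_abs, abs_of_pos hb0]
    gcongr
  set U : ℝ → Set (Fin d → ℝ) := fun c => {x | gauge K x < c} with hU
  have hUopen : ∀ c, IsOpen (U c) := fun c => isOpen_lt hcont continuous_const
  have hUvol : ∀ c, 0 < c → volume (U c) = ENNReal.ofReal (c ^ d) * volume (U 1) := by
    intro c hc
    have : U c = c • U 1 := by
      ext x
      rw [Set.mem_smul_set_iff_inv_smul_mem₀ hc.ne']
      simp only [hU, Set.mem_ofPred_eq, hsmul _ (inv_pos.2 hc).le]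
      rw [inv_mul_lt_iff₀ hc, mul_one]
    rw [this, Measure.addHaar_smul_of_nonneg _ hc.le]
    simp
  have hU0 : volume (U 1) ≠ 0 :=
    ((hUopen 1).measure_pos _ ⟨0, by simp [hU]⟩).ne'
  have hUtop : volume (U 1) ≠ ⊤ :=
    ne_top_of_le_ne_top (measure_closedBall_lt_top (x := (0 : Fin d → ℝ)) (r := 1 * r)).ne
      (measure_mono fun x hx => by simpa using hbd 1 x hx)
  set A : Set (Fin d → ℝ) := ⋃ i, (fun x => x + -v i) ⁻¹' U (1 / 2) with hA
  have hAmem : ∀ x, x ∈ A ↔ ∃ i, gauge K (x - v i) < 1 / 2 := fun x => by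
    simp [hA, hU, sub_eq_add_neg]
  have hAopen : IsOpen A :=
    isOpen_iUnion fun i => (hUopen _).preimage (by fun_prop)
  have hAvol : volume A = n * (ENNReal.ofReal ((1 / 2) ^ d) * volume (U 1)) := by
    rw [hA, measure_iUnion]
    · simp only [measure_preimage_add_right, hUvol (1 / 2) (by norm_num)]
      simp
    · intro i j hij
      refine Set.disjoint_left.2 fun x hx hx' => ?_
      have h1 : gauge K (x + -v i) < 1 / 2 := hx
      have h2 : gauge K (x + -v j) < 1 / 2 := hx'
      have h3 := hadd (-(x + -v i)) (x + -v j)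
      rw [hneg, show -(x + -v i) + (x + -v j) = v i - v j by abel] at h3
      linarith [(h i j hij).1]
    · exact fun i => ((hUopen _).preimage (by fun_prop)).measurableSet
  obtain ⟨V, hV⟩ := (Set.finite_range fun i => ‖v i‖).bddAbove
  have hAbd : ∀ x ∈ A, ‖x‖ ≤ 1 / 2 * r + V := fun x hx => by
    obtain ⟨i, hi⟩ := (hAmem x).1 hx
    have h1 := hbd _ _ hi
    have h2 : ‖v i‖ ≤ V := hV ⟨i, rfl⟩
    have h3 := norm_add_le (x - v i) (v i)
    rw [sub_add_cancel] at h3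
    linarith
  have BM := brunnMinkowski_mul (A := A) (B := -A) (C := U ((l + 1) / 2))
    (R := max (1 / 2 * r + V) ((l + 1) / 2 * r)) hAopen.measurableSet
    hAopen.neg.measurableSet (hUopen _).measurableSet
    (fun x hx => (hAbd x hx).trans (le_max_left _ _))
    (fun x hx => (norm_neg x ▸ hAbd (-x) hx).trans (le_max_left _ _))
    (fun x hx => (hbd _ x hx).trans (le_max_right _ _))
    (fun x hx y hy => by
      obtain ⟨i, hi⟩ := (hAmem x).1 hx
      obtain ⟨j, hj⟩ := (hAmem (-y)).1 hy
      have hij : gauge K (v i - v j) ≤ l := by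
        rcases eq_or_ne i j with rfl | hne
        · simp only [sub_self, gauge_zero]; linarith
        · exact (h i j hne).2
      have h1 := hadd (x - v i) (v i - v j)
      have h2 := hadd (x - v i + (v i - v j)) (-(-y - v j))
      rw [hneg, show x - v i + (v i - v j) + -(-y - v j) = x + y by abel] at h2
      change gauge K _ < _
      rw [hsmul _ (by norm_num)]
      linarith)
  rw [Measure.measure_neg, ← sq, hAvol, hUvol ((l + 1) / 2) (by linarith)] at BM
  have BM' := (ENNReal.pow_le_pow_left_iff two_ne_zero).1 BM
  rw [← mul_assoc, ENNReal.mul_le_mul_iff_left hU0 hUtop, ← ENNReal.ofReal_natCast,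
    ← ENNReal.ofReal_mul (by positivity), ENNReal.ofReal_le_ofReal_iff (by positivity),
    div_pow, div_pow, one_pow, mul_one_div] at BM'
  exact (div_le_div_iff_of_pos_right (by positivity)).1 BM'
end

section
/- Let K be a centrally symmetric convex body in ℝ^d (a compact convex set with nonempty interior satisfying K = −K), and let c_1, …, c_n be pairwise distinct points of ℝ^d such that for all i ≠ j the translates K + c_i and K + c_j intersect, and c_j does not lie in the interior of K + c_i. Then n ≤ 3^d. -/
/-!
Two points `c i`, `c j` of the arrangement satisfy `c j - c i ∈ 2K` and `c j - c i ∉ interior K`: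
in the norm with unit ball `K`, all pairwise distances lie in `[1, 2]`. Fatten the convex hull of
the points to `Q = conv {c i} + εK`, a compact convex set with nonempty interior and
`Q - Q ⊆ 2(1 + ε)K`. For `0 < r < 1/3` the homothets of `Q` with centers `c i` and ratio `r` lie
in `Q` by convexity, and they are pairwise disjoint when `ε = 1/(3r) - 1`, because a common point
gives `(1 - r)(c j - c i) ∈ r(Q - Q) ⊆ (2/3)K`, while `2/3 < 1 - r`. Comparing volumes gives
`n * r ^ d ≤ 1` (`card_mul_pow_le_one`), and `r → 1/3` yields the bound. The fattening ensures
positive volume even when the points lie in a hyperplane.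
-/

open Pointwise

open MeasureTheory

theorem zero_mem_interior_of_symm {d : ℕ} {K : Set (Fin d → ℝ)} (hKconv : Convex ℝ K)
    (hKint : (interior K).Nonempty) (hKsymm : K = -K) : (0 : Fin d → ℝ) ∈ interior K := by
  obtain ⟨x, hx⟩ := hKint
  have hx' : -x ∈ interior K := by
    have h1 : interior (-K) = -interior K :=
      ((Homeomorph.neg (Fin d → ℝ)).preimage_interior K).symm
    rw [hKsymm, h1]
    simpa using hx
  have := hKconv.interior hx hx' (a := 1 / 2) (b := 1 / 2) (by norm_num) (by norm_num)
    (by norm_num)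
  simpa using this

theorem smul_mem_interior_of_lt_one {d : ℕ} {K : Set (Fin d → ℝ)} (hKconv : Convex ℝ K)
    (h0 : (0 : Fin d → ℝ) ∈ interior K) {x : Fin d → ℝ} (hx : x ∈ K) {t : ℝ} (ht0 : 0 ≤ t)
    (ht1 : t < 1) : t • x ∈ interior K := by
  have := hKconv.combo_interior_self_mem_interior h0 hx (a := 1 - t) (b := t) (by linarith)
    ht0 (by ring)
  simpa using this

/-- The volume comparison between `Q = conv {c i} + εK`, `ε = 1/(3r) - 1`, and its `n` disjoint
homothets of ratio `r` centered at the points `c i`. -/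
theorem card_mul_pow_le_one {d n : ℕ} {K : Set (Fin d → ℝ)}
    (hKcomp : IsCompact K) (hKconv : Convex ℝ K)
    (h0 : (0 : Fin d → ℝ) ∈ interior K) (hKsymm : K = -K)
    (c : Fin n → (Fin d → ℝ))
    (h2 : ∀ i j, c j - c i ∈ (2 : ℝ) • K)
    (h1 : ∀ i j, i ≠ j → c j - c i ∉ interior K)
    {r : ℝ} (hr0 : 0 < r) (hr : r < 1 / 3) : (n : ℝ) * r ^ d ≤ 1 := by
  rcases Nat.eq_zero_or_pos n with rfl | hn
  · simp
  obtain ⟨ε, hε, hεr⟩ : ∃ ε : ℝ, 0 < ε ∧ r * (2 * (1 + ε)) = 2 / 3 := by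
    refine ⟨1 / (3 * r) - 1, ?_, by field_simp; ring⟩
    rw [sub_pos, lt_div_iff₀ (by positivity)]
    linarith
  set P := convexHull ℝ (Set.range c) with hP
  set Q := P + ε • K with hQ
  have hcP : ∀ i, c i ∈ P := fun i => subset_convexHull ℝ _ ⟨i, rfl⟩
  have hcQ : ∀ i, c i ∈ Q := fun i =>
    ⟨c i, hcP i, 0, ⟨0, interior_subset h0, smul_zero _⟩, add_zero _⟩
  have hQconv : Convex ℝ Q := (convex_convexHull ℝ _).add (hKconv.smul ε)
  have hQcomp : IsCompact Q :=
    ((Set.finite_range c).isCompact_convexHull (𝕜 := ℝ)).add (hKcomp.smul ε)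
  have hPP : P - P ⊆ (2 : ℝ) • K := by
    rw [hP, ← convexHull_sub]
    refine convexHull_min ?_ (hKconv.smul _)
    rintro _ ⟨_, ⟨j, rfl⟩, _, ⟨i, rfl⟩, rfl⟩
    exact h2 i j
  have hQQ : ∀ x ∈ Q, ∀ y ∈ Q, ∃ k ∈ K, x - y = (2 * (1 + ε)) • k := by
    rintro _ ⟨p, hp, _, ⟨k, hk, rfl⟩, rfl⟩ _ ⟨q, hq, _, ⟨l, hl, rfl⟩, rfl⟩
    obtain ⟨m, hm, hpq⟩ := hPP ⟨p, hp, q, hq, rfl⟩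
    have hl' : -l ∈ K := by rw [hKsymm]; simpa using hl
    have hmem : (2 : ℝ) • m + (ε • k + ε • (-l)) ∈ (2 : ℝ) • K + (ε • K + ε • K) :=
      ⟨_, ⟨m, hm, rfl⟩, _, ⟨_, ⟨k, hk, rfl⟩, _, ⟨_, hl', rfl⟩, rfl⟩, rfl⟩
    rw [← hKconv.add_smul hε.le hε.le, ← hKconv.add_smul (by norm_num) (by positivity)] at hmem
    obtain ⟨z, hz, hz'⟩ := hmem
    refine ⟨z, hz, ?_⟩
    simp only at hpq hz' ⊢
    rw [show 2 * (1 + ε) = 2 + (ε + ε) by ring, hz', hpq]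
    module
  set f : Fin n → Set (Fin d → ℝ) := fun i => AffineMap.homothety (c i) r '' Q with hf
  have hfQ : ∀ i, f i ⊆ Q := by
    rintro i _ ⟨x, hx, rfl⟩
    have := hQconv (hcQ i) hx (a := 1 - r) (b := r) (by linarith) hr0.le (by ring)
    convert this using 1
    simp only [AffineMap.homothety_apply, vsub_eq_sub, vadd_eq_add]
    module
  have hfdisj : Pairwise (Function.onFun Disjoint f) := by
    intro i j hij
    rw [Function.onFun, Set.disjoint_left]
    rintro _ ⟨x, hx, rfl⟩ ⟨y, hy, hxy⟩
    simp only [AffineMap.homothety_apply, vsub_eq_sub, vadd_eq_add] at hxy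
    obtain ⟨k, hk, hk'⟩ := hQQ x hx y hy
    have hlin : (1 - r) • (c j - c i) = (2 / 3 : ℝ) • k := by
      rw [← hεr, mul_smul, ← hk']
      ext t
      have ht := congrFun hxy t
      simp only [Pi.add_apply, Pi.smul_apply, Pi.sub_apply, smul_eq_mul] at ht ⊢
      linear_combination ht
    apply h1 i j hij
    have hne : (1 - r) ≠ 0 := by linarith
    have : c j - c i = ((1 - r)⁻¹ * (2 / 3)) • k := by
      rw [mul_smul, ← hlin, smul_smul, inv_mul_cancel₀ hne, one_smul]
    rw [this]
    refine smul_mem_interior_of_lt_one hKconv h0 hk ?_ ?_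
    · have : 0 < 1 - r := by linarith
      positivity
    · rw [inv_mul_lt_iff₀ (by linarith)]
      linarith
  have hfmeas : ∀ i, MeasurableSet (f i) := fun i =>
    (hQcomp.image (AffineMap.homothety_continuous (c i) r)).measurableSet
  have hvol : ∑ i, volume (f i) ≤ volume Q := by
    rw [← tsum_fintype (L := .unconditional _), ← measure_iUnion hfdisj hfmeas]
    exact measure_mono (Set.iUnion_subset hfQ)
  have hpos : 0 < volume Q := by
    have hKpos : 0 < volume (ε • K) := by
      rw [Measure.addHaar_smul_of_nonneg _ hε.le]
      have : 0 < volume K := Measure.measure_pos_of_nonempty_interior _ ⟨0, h0⟩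
      exact ENNReal.mul_pos (by simp; positivity) this.ne'
    have hsub : (c ⟨0, hn⟩) +ᵥ (ε • K) ⊆ Q := by
      rintro _ ⟨y, hy, rfl⟩
      exact ⟨_, hcP _, y, hy, rfl⟩
    calc 0 < volume (ε • K) := hKpos
      _ = volume ((c ⟨0, hn⟩) +ᵥ (ε • K)) := (measure_vadd _ _ _).symm
      _ ≤ volume Q := measure_mono hsub
  have hfin : volume Q ≠ ⊤ := hQcomp.measure_lt_top.ne
  have hsum : ∑ i, volume (f i) = ENNReal.ofReal ((n : ℝ) * r ^ d) * volume Q := by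
    simp only [hf, Measure.addHaar_image_homothety, Module.finrank_fin_fun]
    rw [Finset.sum_const, Finset.card_univ, Fintype.card_fin, nsmul_eq_mul,
      abs_of_pos (by positivity), ENNReal.ofReal_mul (by positivity), ENNReal.ofReal_natCast,
      mul_assoc]
  rw [hsum] at hvol
  have := (ENNReal.mul_le_mul_iff_left hpos.ne' hfin).1 (hvol.trans_eq (one_mul _).symm)
  simpa only [ENNReal.ofReal_le_one] using this

/-- A pairwise intersecting Minkowski arrangement of translates of a centrally
symmetric convex body `K` in `ℝ^d` has at most `3^d` members. -/
theorem stmt1 {d n : ℕ} (K : Set (Fin d → ℝ))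
    (hKcomp : IsCompact K) (hKconv : Convex ℝ K)
    (hKint : (interior K).Nonempty) (hKsymm : K = -K)
    (c : Fin n → (Fin d → ℝ)) (hinj : Function.Injective c)
    (h : ∀ i j : Fin n, i ≠ j →
      ((c i +ᵥ K) ∩ (c j +ᵥ K)).Nonempty ∧ c j ∉ interior (c i +ᵥ K)) :
    n ≤ 3 ^ d := by
  have h0 := zero_mem_interior_of_symm hKconv hKint hKsymm
  have h1 : ∀ i j, i ≠ j → c j - c i ∉ interior K := by
    intro i j hij hmem
    apply (h i j hij).2
    rw [interior_vadd]
    exact ⟨_, hmem, by simp⟩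
  have h2 : ∀ i j, c j - c i ∈ (2 : ℝ) • K := by
    intro i j
    rcases eq_or_ne i j with rfl | hij
    · exact ⟨0, interior_subset h0, by simp⟩
    obtain ⟨_, ⟨k, hk, rfl⟩, ⟨l, hl, hkl⟩⟩ := (h i j hij).1
    have hl' : -l ∈ K := by rw [hKsymm]; simpa using hl
    rw [show (2 : ℝ) = 1 + 1 by norm_num, hKconv.add_smul zero_le_one zero_le_one, one_smul]
    refine ⟨k, hk, -l, hl', ?_⟩
    simp only [vadd_eq_add] at hkl ⊢
    linear_combination -hkl
  have hlim : (n : ℝ) * (1 / 3) ^ d ≤ 1 := by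
    have hcont : Filter.Tendsto (fun r : ℝ => (n : ℝ) * r ^ d) (nhdsWithin (1 / 3) (Set.Iio (1 / 3)))
        (nhds ((n : ℝ) * (1 / 3) ^ d)) :=
      ((by fun_prop : Continuous fun r : ℝ => (n : ℝ) * r ^ d).tendsto _).mono_left
        nhdsWithin_le_nhds
    refine le_of_tendsto hcont ?_
    filter_upwards [Ioo_mem_nhdsLT (show (0 : ℝ) < 1 / 3 by norm_num)] with r hr
    exact card_mul_pow_le_one hKcomp hKconv h0 hKsymm c h2 h1 hr.1 hr.2
  rw [one_div, inv_pow, mul_inv_le_iff₀ (by positivity), one_mul] at hlim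
  exact_mod_cast hlim
end

section
/- Let K be a d-dimensional parallelotope in ℝ^d, i.e., K = T '' ([−1,1]^d) for some invertible linear map T : ℝ^d → ℝ^d. Then there exist 3^d pairwise distinct points c_1, …, c_{3^d} in ℝ^d such that for all i ≠ j the translates K + c_i and K + c_j intersect and c_j does not lie in the interior of K + c_i. -/
/-!
The centers are the images under `T` of the `3 ^ d` points of `{0, 1, 2}^d`. Two such points `x ≠ y`
differ by at most `2` in each coordinate and by at least `1` in some coordinate. The first bound puts
`T ((x + y) / 2)` in both translates. The second one means that moving `T y` slightly
further away from `T x`, to `T (x + (1 + t) (y - x))` with `t > 0`, leaves `T x + K`, so that `T y`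
is not an interior point of `T x + K`.
-/

open Pointwise

lemma mem_vadd_image_cube {d : ℕ} (T : (Fin d → ℝ) ≃ₗ[ℝ] (Fin d → ℝ)) (x z : Fin d → ℝ) :
    T z ∈ T x +ᵥ (⇑T '' Set.Icc (-1 : Fin d → ℝ) 1) ↔ ∀ k, |z k - x k| ≤ 1 := by
  rw [Set.mem_vadd_set_iff_neg_vadd_mem, vadd_eq_add, ← map_neg, ← map_add,
    T.injective.mem_set_image, Set.mem_Icc, Pi.le_def, Pi.le_def, ← forall_and]
  refine forall_congr' fun k => ?_
  rw [abs_le]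
  simp only [Pi.neg_apply, Pi.add_apply, Pi.one_apply, neg_add_eq_sub]

/-- An interior point of the translate stays inside when pushed slightly away from the center, so
its coordinate distances to the center are strictly less than `1`. -/
lemma notMem_interior_vadd_image_cube {d : ℕ} (T : (Fin d → ℝ) ≃ₗ[ℝ] (Fin d → ℝ))
    (x y : Fin d → ℝ) (k : Fin d) (hk : 1 ≤ |y k - x k|) :
    T y ∉ interior (T x +ᵥ (⇑T '' Set.Icc (-1 : Fin d → ℝ) 1)) := by
  intro h
  have hc : Continuous fun t : ℝ => T y + t • T (y - x) := by fun_prop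
  have h0 : T y + (0 : ℝ) • T (y - x) ∈
      interior (T x +ᵥ (⇑T '' Set.Icc (-1 : Fin d → ℝ) 1)) := by simpa using h
  have hev := hc.continuousAt.eventually (isOpen_interior.mem_nhds h0)
  obtain ⟨ε, hε, hball⟩ := Metric.eventually_nhds_iff.1 hev
  have hm := interior_subset (hball (y := ε / 2) (by
    rw [Real.dist_eq, sub_zero, abs_of_pos (by positivity)]; linarith))
  rw [← map_smul, ← map_add, mem_vadd_image_cube] at hm
  have h1 := hm k
  have h2 : (y + (ε / 2) • (y - x)) k - x k = (1 + ε / 2) * (y k - x k) := by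
    simp only [Pi.add_apply, Pi.smul_apply, Pi.sub_apply, smul_eq_mul]; ring
  rw [h2, abs_mul, abs_of_pos (by positivity)] at h1
  nlinarith

/-- If `K` is a `d`-dimensional parallelotope in `ℝ^d`, then there are `3^d`
translates of `K` in pairwise intersecting Minkowski arrangement. -/
theorem stmt2 {d : ℕ} (K : Set (Fin d → ℝ))
    (hK : ∃ T : (Fin d → ℝ) ≃ₗ[ℝ] (Fin d → ℝ),
      K = ⇑T '' Set.Icc (-1 : Fin d → ℝ) 1) :
    ∃ c : Fin (3 ^ d) → (Fin d → ℝ), Function.Injective c ∧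
      ∀ i j : Fin (3 ^ d), i ≠ j →
        ((c i +ᵥ K) ∩ (c j +ᵥ K)).Nonempty ∧ c j ∉ interior (c i +ᵥ K) := by
  obtain ⟨T, rfl⟩ := hK
  let e : Fin (3 ^ d) ≃ (Fin d → Fin 3) := finFunctionFinEquiv.symm
  let p : Fin (3 ^ d) → Fin d → ℝ := fun i k => ((e i k : ℕ) : ℝ)
  have hp : ∀ i k, 0 ≤ p i k ∧ p i k ≤ 2 := fun i k =>
    ⟨Nat.cast_nonneg _, by
      have h : (e i k : ℕ) ≤ 2 := Nat.le_of_lt_succ (e i k).isLt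
      change ((e i k : ℕ) : ℝ) ≤ 2
      exact_mod_cast h⟩
  have hsep : ∀ i j, i ≠ j → ∃ k, 1 ≤ |p j k - p i k| := by
    intro i j hij
    obtain ⟨k, hk⟩ := Function.ne_iff.1 (e.injective.ne hij)
    refine ⟨k, ?_⟩
    have hz : ((e j k : ℕ) : ℤ) - ((e i k : ℕ) : ℤ) ≠ 0 := by
      have := Fin.val_ne_of_ne hk
      omega
    have h : ((1 : ℤ) : ℝ) ≤ ((|((e j k : ℕ) : ℤ) - ((e i k : ℕ) : ℤ)| : ℤ) : ℝ) :=
      Int.cast_le.2 (Int.one_le_abs hz)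
    simpa only [Int.cast_one, Int.cast_abs, Int.cast_sub, Int.cast_natCast] using h
  refine ⟨fun i => T (p i), ?_, ?_⟩
  · intro i j hij
    by_contra hne
    obtain ⟨k, hk⟩ := hsep i j hne
    rw [T.injective hij, sub_self, abs_zero] at hk
    linarith
  · intro i j hij
    obtain ⟨k, hk⟩ := hsep i j hij
    refine ⟨⟨T (fun k => (p i k + p j k) / 2), ?_, ?_⟩,
      notMem_interior_vadd_image_cube T _ _ k hk⟩ <;>
    · rw [mem_vadd_image_cube]
      intro k
      rw [abs_le]
      constructor <;> linarith [hp i k, hp j k]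
end

section
/- Let d ≥ 2 and let K be a centrally symmetric convex body in ℝ^d (a compact convex set with nonempty interior satisfying K = −K). Then there exist 2d + 3 pairwise distinct points c_1, …, c_{2d+3} in ℝ^d such that for all i ≠ j the translates K + c_i and K + c_j intersect and c_j does not lie in the interior of K + c_i. -/
/-!
Let `p` be the norm with unit ball `K` (the gauge of `K`). Translates `K + a` and `K + b` with
`p a, p b ≤ 1` always meet, at the midpoint of `a` and `b`, and `b` is outside the interior of
`K + a` exactly when `1 ≤ p (b - a)`. So it suffices to find `2d + 3` points of `K` at pairwise
`p`-distance at least one.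

In dimension two, an affine regular hexagon inscribed in `K`, with vertices
`±u, ±v, ±(u - v)`, together with the origin, gives seven such points; it exists by the
intermediate value theorem (`exists_hexagon`). Each further dimension contributes two points `±x`,
where `x` is a unit vector at distance one from the subspace `F` containing the points found so
far (`exists_unit_far`, the finite-dimensional Riesz lemma): `±x` then have distance at least one
from all of `F`, and distance two from each other (`exists_list`).
-/

open Pointwise

/-- The Riesz lemma with sharp constant: a unit vector at distance one from a proper subspace,
found by maximizing over the unit ball a functional that vanishes on the subspace. -/
lemma exists_unit_far {d : ℕ} (p : Seminorm ℝ (Fin d → ℝ)) (h0 : ∀ x, p x = 0 → x = 0)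
    (hc : IsCompact {x | p x ≤ 1}) (F : Submodule ℝ (Fin d → ℝ)) (hF : F < ⊤) :
    ∃ x, p x ≤ 1 ∧ ∀ y ∈ F, 1 ≤ p (x - y) := by
  obtain ⟨f, hf0, hfF⟩ := F.exists_le_ker_of_lt_top hF
  obtain ⟨z, hz⟩ : ∃ z, f z ≠ 0 := by
    by_contra! h
    exact hf0 (LinearMap.ext h)
  obtain ⟨x, hx, hmax⟩ := hc.exists_isMaxOn ⟨0, by simp⟩
    (LinearMap.continuous_of_finiteDimensional f).continuousOn
  have key : ∀ w, f w ≤ f x * p w := by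
    intro w
    rcases (apply_nonneg p w).eq_or_lt with h | h
    · rw [← h, h0 w h.symm]; simp
    · have hm : f ((p w)⁻¹ • w) ≤ f x := by
        apply hmax
        change p _ ≤ 1
        rw [map_smul_eq_mul, Real.norm_eq_abs, abs_of_pos (inv_pos.2 h), inv_mul_cancel₀ h.ne']
      rw [map_smul, smul_eq_mul, inv_mul_le_iff₀ h] at hm
      linarith
  have hpos : 0 < f x := by
    by_contra! hle
    have h1 := key z
    have h2 := key (-z)
    have h3 : f x * p z ≤ 0 := mul_nonpos_of_nonpos_of_nonneg hle (apply_nonneg p z)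
    rw [map_neg, map_neg_eq_map] at h2
    exact hz (by linarith)
  refine ⟨x, hx, fun y hy => ?_⟩
  have h := key (x - y)
  rw [map_sub, show f y = 0 from hfF hy, sub_zero] at h
  exact one_le_of_le_mul_left₀ hpos h

/-- Unit vectors `u, v, u - v`: three consecutive vertices of an affine regular hexagon inscribed
in the unit ball. The point `v` is found on an arc of the unit sphere joining `u` to `-u`. -/
lemma exists_hexagon {d : ℕ} (hd : 2 ≤ d) (p : Seminorm ℝ (Fin d → ℝ))
    (h0 : ∀ x, p x = 0 → x = 0) (hp : Continuous p) :
    ∃ u v, p u = 1 ∧ p v = 1 ∧ p (u - v) = 1 := by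
  have normalize : ∀ x, x ≠ 0 → p ((p x)⁻¹ • x) = 1 := by
    intro x hx
    have : 0 < p x := lt_of_le_of_ne (apply_nonneg p x) (fun h => hx (h0 x h.symm))
    rw [map_smul_eq_mul, Real.norm_eq_abs, abs_of_pos (inv_pos.2 this), inv_mul_cancel₀ this.ne']
  obtain ⟨u, hu⟩ : ∃ u, p u = 1 := by
    refine ⟨_, normalize (fun _ => 1) fun h => ?_⟩
    simpa using congrFun h ⟨0, by omega⟩
  have hu0 : u ≠ 0 := by rintro rfl; simp at hu
  obtain ⟨w, hw⟩ : ∃ w, w ∉ Submodule.span ℝ {u} := by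
    by_contra! h
    have h1 : Submodule.span ℝ {u} = ⊤ := (Submodule.eq_top_iff').2 h
    have h2 := finrank_span_singleton (K := ℝ) hu0
    rw [h1, finrank_top, Module.finrank_fin_fun] at h2
    omega
  -- A parabolic arc from `u` to `-u` in the plane of `u` and `w`, avoiding the origin.
  let γ : ℝ → (Fin d → ℝ) := fun t => t • u + (1 - t ^ 2) • w
  have hγ0 : ∀ t, γ t ≠ 0 := by
    intro t ht
    by_cases h : 1 - t ^ 2 = 0
    · have : t • u = 0 := by simpa [γ, h] using ht
      rcases smul_eq_zero.1 this with rfl | h'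
      · norm_num at h
      · exact hu0 h'
    · apply hw
      have h1 : (1 - t ^ 2) • w = (-t) • u := by
        rw [neg_smul]; exact eq_neg_of_add_eq_zero_right ht
      have h2 : w = ((1 - t ^ 2)⁻¹ * (-t)) • u := by
        rw [mul_smul, ← h1, smul_smul, inv_mul_cancel₀ h, one_smul]
      rw [h2]
      exact Submodule.smul_mem _ _ (Submodule.mem_span_singleton_self u)
  have hγc : Continuous γ := by fun_prop
  have hg : Continuous fun t => p (u - (p (γ t))⁻¹ • γ t) := by
    refine hp.comp (continuous_const.sub (((hp.comp hγc).inv₀ fun t h => ?_).smul hγc))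
    exact hγ0 t (h0 _ h)
  have e1 : γ 1 = u := by simp [γ]
  have e2 : γ (-1) = -u := by simp [γ]
  have hmem : (1 : ℝ) ∈ Set.Icc (p (u - (p (γ 1))⁻¹ • γ 1)) (p (u - (p (γ (-1)))⁻¹ • γ (-1))) := by
    rw [e1, e2, map_neg_eq_map, hu]
    have : u - (1 : ℝ)⁻¹ • -u = (2 : ℝ) • u := by module
    rw [this, map_smul_eq_mul, hu]
    simp
  obtain ⟨t, ht⟩ := mem_range_of_exists_le_of_exists_ge hg ⟨1, hmem.1⟩ ⟨-1, hmem.2⟩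
  exact ⟨u, _, hu, normalize _ (hγ0 t), ht⟩

/-- Some subspace of dimension at most `k + 2` contains `2 (k + 2) + 3` points of the unit ball at
pairwise distance at least one, listed in `L`; the
subspace `F` records where they lie, so that the next pair can be chosen at distance one from it. -/
lemma exists_list {d : ℕ} (hd : 2 ≤ d) (p : Seminorm ℝ (Fin d → ℝ))
    (h0 : ∀ x, p x = 0 → x = 0) (hp : Continuous p) (hc : IsCompact {x | p x ≤ 1}) (k : ℕ)
    (hk : k + 2 ≤ d) :
    ∃ (F : Submodule ℝ (Fin d → ℝ)) (L : List (Fin d → ℝ)), Module.finrank ℝ F ≤ k + 2 ∧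
      (∀ x ∈ L, x ∈ F) ∧ L.length = 2 * k + 7 ∧ (∀ x ∈ L, p x ≤ 1) ∧
      L.Pairwise fun x y => 1 ≤ p (x - y) := by
  induction k with
  | zero =>
    obtain ⟨u, v, hu, hv, huv⟩ := exists_hexagon hd p h0 hp
    have hvu : p (v - u) = 1 := by rw [map_sub_rev, huv]
    have two : ∀ x, p ((2 : ℝ) • x) = 2 * p x := fun x => by rw [map_smul_eq_mul]; simp
    have a1 : 1 ≤ p (u + v) := by
      have h := map_add_le_add p (u + v) (u - v)
      rw [show u + v + (u - v) = (2 : ℝ) • u by module, two] at h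
      linarith
    have a2 : 1 ≤ p ((2 : ℝ) • u - v) := by
      have h := map_add_le_add p ((2 : ℝ) • u - v) v
      rw [sub_add_cancel, two] at h
      linarith
    have a3 : 1 ≤ p ((2 : ℝ) • v - u) := by
      have h := map_add_le_add p ((2 : ℝ) • v - u) u
      rw [sub_add_cancel, two] at h
      linarith
    have a4 : 1 ≤ p ((2 : ℝ) • u) := by rw [two]; linarith
    have a5 : 1 ≤ p ((2 : ℝ) • v) := by rw [two]; linarith
    have a6 : 1 ≤ p ((2 : ℝ) • (u - v)) := by rw [two]; linarith
    have neg : ∀ x y, 1 ≤ p x → y = -x → 1 ≤ p y := by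
      rintro x _ h rfl
      rwa [map_neg_eq_map]
    have pos : ∀ x y, 1 ≤ p x → y = x → 1 ≤ p y := by
      rintro x _ h rfl
      exact h
    have hu' := hu.ge
    have hv' := hv.ge
    have huv' := huv.ge
    have memu : u ∈ Submodule.span ℝ (Set.range ![u, v]) := Submodule.subset_span ⟨0, rfl⟩
    have memv : v ∈ Submodule.span ℝ (Set.range ![u, v]) := Submodule.subset_span ⟨1, rfl⟩
    refine ⟨Submodule.span ℝ (Set.range ![u, v]), [0, u, -u, v, -v, u - v, v - u], ?_, ?_, rfl,
      ?_, ?_⟩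
    · exact (finrank_range_le_card (R := ℝ) ![u, v]).trans (by simp)
    · simp only [List.mem_cons, List.not_mem_nil, or_false]
      rintro x (rfl | rfl | rfl | rfl | rfl | rfl | rfl)
      · exact zero_mem _
      · exact memu
      · exact neg_mem memu
      · exact memv
      · exact neg_mem memv
      · exact sub_mem memu memv
      · exact sub_mem memv memu
    · simp [hu, hv, huv, hvu]
    · simp only [List.pairwise_cons, List.mem_cons, List.not_mem_nil, or_false, forall_eq_or_imp,
        forall_eq, List.Pairwise.nil, IsEmpty.forall_iff, implies_true, and_true]
      -- Up to sign, the difference of any two of the seven points is one of these nine vectors.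
      refine ⟨⟨?_, ?_, ?_, ?_, ?_, ?_⟩, ⟨?_, ?_, ?_, ?_, ?_⟩, ⟨?_, ?_, ?_, ?_⟩, ⟨?_, ?_, ?_⟩,
        ⟨?_, ?_⟩, ?_⟩
      all_goals first
        | exact pos _ _ hu' (by module)
        | exact neg _ _ hu' (by module)
        | exact pos _ _ hv' (by module)
        | exact neg _ _ hv' (by module)
        | exact pos _ _ huv' (by module)
        | exact neg _ _ huv' (by module)
        | exact pos _ _ a1 (by module)
        | exact neg _ _ a1 (by module)
        | exact pos _ _ a2 (by module)
        | exact neg _ _ a2 (by module)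
        | exact pos _ _ a3 (by module)
        | exact neg _ _ a3 (by module)
        | exact pos _ _ a4 (by module)
        | exact pos _ _ a5 (by module)
        | exact pos _ _ a6 (by module)
  | succ k ih =>
    obtain ⟨F, L, hF, hLF, hlen, hL1, hL⟩ := ih (by omega)
    have hFtop : F < ⊤ := by
      refine lt_of_le_of_ne le_top fun h => ?_
      rw [h, finrank_top, Module.finrank_fin_fun] at hF
      omega
    obtain ⟨x, hx1, hx⟩ := exists_unit_far p h0 hc F hFtop
    have hxx : 1 ≤ p x := by simpa using hx 0 (zero_mem _)
    refine ⟨F ⊔ Submodule.span ℝ {x}, x :: -x :: L, ?_, ?_, ?_, ?_, ?_⟩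
    · have h1 := Submodule.finrank_add_le_finrank_add_finrank F (Submodule.span ℝ {x})
      have h2 := finrank_span_le_card (R := ℝ) ({x} : Set (Fin d → ℝ))
      simp only [Set.toFinset_singleton, Finset.card_singleton] at h2
      omega
    · have hxm : x ∈ F ⊔ Submodule.span ℝ {x} :=
        Submodule.mem_sup_right (Submodule.mem_span_singleton_self x)
      simp only [List.mem_cons]
      rintro y (rfl | rfl | hy)
      · exact hxm
      · exact neg_mem hxm
      · exact Submodule.mem_sup_left (hLF y hy)
    · simp only [List.length_cons]; omega
    · simpa [hx1] using hL1
    · simp only [List.pairwise_cons, List.mem_cons, forall_eq_or_imp]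
      refine ⟨⟨?_, fun y hy => hx y (hLF y hy)⟩, fun y hy => ?_, hL⟩
      · rw [show x - -x = (2 : ℝ) • x by module, map_smul_eq_mul, Real.norm_eq_abs, abs_two]
        linarith
      · rw [show -x - y = -(x - -y) by module, map_neg_eq_map]
        exact hx _ (neg_mem (hLF y hy))

/-- For `d ≥ 2` and a centrally symmetric convex body `K` in `ℝ^d`, there exist
`2d + 3` translates of `K` in pairwise intersecting Minkowski arrangement. -/
theorem stmt4 {d : ℕ} (hd : 2 ≤ d) (K : Set (Fin d → ℝ))
    (hKcomp : IsCompact K) (hKconv : Convex ℝ K)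
    (hKint : (interior K).Nonempty) (hKsymm : K = -K) :
    ∃ c : Fin (2 * d + 3) → (Fin d → ℝ), Function.Injective c ∧
      ∀ i j : Fin (2 * d + 3), i ≠ j →
        ((c i +ᵥ K) ∩ (c j +ᵥ K)).Nonempty ∧ c j ∉ interior (c i +ᵥ K) := by
  have hneg : ∀ x ∈ K, -x ∈ K := by
    intro x hx
    rw [hKsymm] at hx
    exact hx
  have hK0 : K ∈ nhds (0 : Fin d → ℝ) := by
    obtain ⟨x, hx⟩ := hKint
    rw [← mem_interior_iff_mem_nhds]
    have := hKconv.combo_interior_self_mem_interior hx (hneg x (interior_subset hx))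
      (a := 1 / 2) (b := 1 / 2) (by norm_num) (by norm_num) (by norm_num)
    simpa using this
  have hbal : Balanced ℝ K := by
    rw [balanced_iff_neg_mem hKconv]
    exact fun x hx => hneg x hx
  let p : Seminorm ℝ (Fin d → ℝ) := gaugeSeminorm hbal hKconv (absorbent_nhds_zero hK0)
  have hpK : ∀ x, p x ≤ 1 ↔ x ∈ K := fun x => by
    have h := gauge_le_one_iff_mem_closure hKconv hK0 (x := x)
    rw [hKcomp.isClosed.closure_eq] at h
    exact h
  have hpint : ∀ x, p x < 1 ↔ x ∈ interior K := fun x => gauge_lt_one_iff_mem_interior hKconv hK0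
  have hp0 : ∀ x, p x = 0 → x = 0 := fun x hx =>
    (gauge_eq_zero (absorbent_nhds_zero hK0) (hKcomp.isVonNBounded ℝ)).1 hx
  have hpc : Continuous p := continuous_gauge hKconv hK0
  have hcomp : IsCompact {x | p x ≤ 1} := by simpa [hpK] using hKcomp
  obtain ⟨F, L, -, -, hlen, hL1, hL⟩ := exists_list hd p hp0 hpc hcomp (d - 2) (by omega)
  have hlen' : 2 * d + 3 = L.length := by omega
  let c : Fin (2 * d + 3) → (Fin d → ℝ) := fun i => L.get (Fin.cast hlen' i)
  have hc1 : ∀ i, p (c i) ≤ 1 := fun i => hL1 _ (L.get_mem _)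
  have hfar : ∀ i j, i ≠ j → 1 ≤ p (c j - c i) := by
    intro i j hij
    rw [List.pairwise_iff_get] at hL
    rcases lt_or_gt_of_ne hij with h | h
    · rw [map_sub_rev]
      exact hL (Fin.cast hlen' i) (Fin.cast hlen' j) h
    · exact hL (Fin.cast hlen' j) (Fin.cast hlen' i) h
  have hhalf : ∀ i j, p ((1 / 2 : ℝ) • (c j - c i)) ≤ 1 := by
    intro i j
    have h := map_sub_le_add p (c j) (c i)
    have h1 := hc1 i
    have h2 := hc1 j
    rw [map_smul_eq_mul, Real.norm_eq_abs, abs_of_pos (by norm_num)]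
    linarith
  refine ⟨c, fun i j hij => ?_, fun i j hij => ⟨⟨(1 / 2 : ℝ) • (c i + c j), ?_, ?_⟩, ?_⟩⟩
  · by_contra hne
    have := hfar i j hne
    rw [hij, sub_self, map_zero] at this
    linarith
  · refine ⟨(1 / 2 : ℝ) • (c j - c i), (hpK _).1 (hhalf i j), ?_⟩
    simp only [vadd_eq_add]
    module
  · refine ⟨(1 / 2 : ℝ) • (c i - c j), (hpK _).1 (hhalf j i), ?_⟩
    simp only [vadd_eq_add]
    module
  · intro hmem
    rw [interior_vadd] at hmem
    obtain ⟨y, hy, hyc⟩ := hmem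
    have h := (hpint y).2 hy
    have : y = c j - c i := by rw [← hyc]; simp
    rw [this] at h
    exact absurd (hfar i j hij) (not_le.2 h)
end

section
/- Let K be a centrally symmetric convex body in ℝ² (a compact convex set with nonempty interior satisfying K = −K). Then there exist 7 pairwise distinct points c_1, …, c_7 in ℝ² such that for all i ≠ j the translates K + c_i and K + c_j intersect and c_j does not lie in the interior of K + c_i. -/
/-!
Let `g` be the gauge of `K`, a norm whose closed unit ball is `K`. The condition on the centres
says exactly that their pairwise `g`-distances lie in `[1, 2]`.

There are `u`, `v` with `g u = g v = g (u - v) = 1`: fix a unit vector `u` and let `v` run over the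
unit sphere, which is connected; `g (u - v)` goes from `0` (at `v = u`) to `2` (at `v = -u`), so it
takes the value `1` (`exists_unit_triangle`). The centres are the vertices
`±u, ±v, ±(u - v)` of the resulting affinely regular hexagon, together with the origin. Up to sign,
the differences of these points are the unit vectors `u`, `v`, `u - v`, their doubles, and
`u + v`, `2u - v`, `2v - u`; the last three are sums of two unit vectors, and also differences of a
doubled unit vector and a unit vector, so the triangle inequality puts their length in `[1, 2]`.
-/

open Pointwise

/-- The unit sphere of the gauge contains `u`, `v` with `u - v` in it as well. The intermediate
value theorem is applied on the punctured plane, with `x` standing for the unit vector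
`(g x)⁻¹ • x`. -/
lemma exists_unit_triangle {K : Set (Fin 2 → ℝ)} (hKconv : Convex ℝ K) (h0 : K ∈ nhds 0)
    (hneg : ∀ x, gauge K (-x) = gauge K x) (hpos : ∀ x, x ≠ 0 → 0 < gauge K x) :
    ∃ u v : Fin 2 → ℝ, gauge K u = 1 ∧ gauge K v = 1 ∧ gauge K (u - v) = 1 := by
  have hcont : Continuous (gauge K) := continuous_gauge hKconv h0
  have hunit : ∀ x, x ≠ 0 → gauge K ((gauge K x)⁻¹ • x) = 1 := fun x hx => by
    rw [gauge_smul_of_nonneg (inv_nonneg.2 (hpos x hx).le), smul_eq_mul,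
      inv_mul_cancel₀ (hpos x hx).ne']
  obtain ⟨e, he⟩ : ∃ e : Fin 2 → ℝ, e ≠ 0 := exists_ne 0
  obtain ⟨u, hu⟩ : ∃ u : Fin 2 → ℝ, gauge K u = 1 := ⟨_, hunit e he⟩
  have hu0 : u ≠ 0 := by
    rintro rfl
    simp at hu
  have hconn : IsPreconnected ({0}ᶜ : Set (Fin 2 → ℝ)) :=
    (isConnected_compl_singleton_of_one_lt_rank (by simp) 0).isPreconnected
  have hf : ContinuousOn (fun x => gauge K (u - (gauge K x)⁻¹ • x)) ({0}ᶜ : Set (Fin 2 → ℝ)) :=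
    hcont.comp_continuousOn (continuousOn_const.sub
      ((hcont.continuousOn.inv₀ fun x hx => (hpos x hx).ne').smul continuousOn_id))
  have hleft : gauge K (u - (gauge K u)⁻¹ • u) = 0 := by simp [hu]
  have hright : gauge K (u - (gauge K (-u))⁻¹ • -u) = 2 := by
    have h : u - (gauge K (-u))⁻¹ • -u = (2 : ℝ) • u := by
      rw [hneg, hu]
      module
    rw [h, gauge_smul_of_nonneg zero_le_two, hu]
    simp
  obtain ⟨x, hx, hx1⟩ := hconn.intermediate_value (a := u) (b := -u) hu0
    (neg_ne_zero.2 hu0) hf (show (1 : ℝ) ∈ Set.Icc _ _ by simp only [hleft, hright]; norm_num)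
  exact ⟨u, _, hu, hunit x hx, hx1⟩

/-- For a convex neighbourhood `K` of the origin with an even gauge, a unit triangle `0, u, v`
generates seven points at pairwise gauge distances in `[1, 2]`. -/
lemma hexagon_dist {K : Set (Fin 2 → ℝ)} (hKconv : Convex ℝ K) (h0 : K ∈ nhds 0)
    (hneg : ∀ x, gauge K (-x) = gauge K x) {u v : Fin 2 → ℝ} (hu : gauge K u = 1)
    (hv : gauge K v = 1) (huv : gauge K (u - v) = 1) (i j : Fin 7) (hij : i ≠ j) :
    gauge K ((![0, u, v, v - u, -u, -v, u - v] : Fin 7 → Fin 2 → ℝ) i -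
      (![0, u, v, v - u, -u, -v, u - v] : Fin 7 → Fin 2 → ℝ) j) ∈ Set.Icc (1 : ℝ) 2 := by
  have hadd : ∀ x y, gauge K (x + y) ≤ gauge K x + gauge K y :=
    gauge_add_le hKconv (absorbent_nhds_zero h0)
  have htwo : ∀ x, gauge K x = 1 → gauge K ((2 : ℝ) • x) = 2 := fun x hx => by
    rw [gauge_smul_of_nonneg zero_le_two, hx]
    simp
  have one_mem : ∀ x, gauge K x = 1 → gauge K x ∈ Set.Icc (1 : ℝ) 2 := fun x hx => by
    rw [hx]
    norm_num
  have two_mem : ∀ x, gauge K x = 1 → gauge K ((2 : ℝ) • x) ∈ Set.Icc (1 : ℝ) 2 :=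
    fun x hx => by
      rw [htwo x hx]
      norm_num
  -- If `x`, `y`, `x - y` are unit vectors, then `x + y = 2 x - (x - y)` has length at least `1`.
  have add_mem : ∀ x y, gauge K x = 1 → gauge K y = 1 → gauge K (x - y) = 1 →
      gauge K (x + y) ∈ Set.Icc (1 : ℝ) 2 := fun x y hx hy hxy => by
    have h1 := hadd x y
    have h2 := hadd (x + y) (x - y)
    rw [show x + y + (x - y) = (2 : ℝ) • x by module, htwo x hx] at h2
    constructor <;> linarith
  have hvu : gauge K (v - u) = 1 := by rw [← neg_sub, hneg, huv]
  have a1 := one_mem u hu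
  have a2 := one_mem v hv
  have a3 := one_mem _ huv
  have b1 := two_mem u hu
  have b2 := two_mem v hv
  have b3 := two_mem _ huv
  have d1 := add_mem u v hu hv huv
  have d2 := add_mem u (u - v) hu huv (by rwa [sub_sub_cancel])
  have d3 := add_mem v (v - u) hv hvu (by rwa [sub_sub_cancel])
  have key : ∀ x y, x = y ∨ x = -y → gauge K y ∈ Set.Icc (1 : ℝ) 2 →
      gauge K x ∈ Set.Icc (1 : ℝ) 2 := by
    rintro x y (rfl | rfl) h
    · exact h
    · rwa [hneg]
  fin_cases i <;> fin_cases j <;> first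
    | exact absurd rfl hij
    | (simp only [Fin.reduceFinMk, Fin.zero_eta, Fin.mk_one, Fin.isValue, Matrix.cons_val]
       first
        | exact key _ _ (by first | (left; module) | (right; module)) a1
        | exact key _ _ (by first | (left; module) | (right; module)) a2
        | exact key _ _ (by first | (left; module) | (right; module)) a3
        | exact key _ _ (by first | (left; module) | (right; module)) b1
        | exact key _ _ (by first | (left; module) | (right; module)) b2
        | exact key _ _ (by first | (left; module) | (right; module)) b3
        | exact key _ _ (by first | (left; module) | (right; module)) d1
        | exact key _ _ (by first | (left; module) | (right; module)) d2
        | exact key _ _ (by first | (left; module) | (right; module)) d3)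

/-- For a centrally symmetric convex body `K` in the plane, there exist `7`
translates of `K` in pairwise intersecting Minkowski arrangement. -/
theorem stmt5 (K : Set (Fin 2 → ℝ))
    (hKcomp : IsCompact K) (hKconv : Convex ℝ K)
    (hKint : (interior K).Nonempty) (hKsymm : K = -K) :
    ∃ c : Fin 7 → (Fin 2 → ℝ), Function.Injective c ∧
      ∀ i j : Fin 7, i ≠ j →
        ((c i +ᵥ K) ∩ (c j +ᵥ K)).Nonempty ∧ c j ∉ interior (c i +ᵥ K) := by
  have hsymm : ∀ x ∈ K, -x ∈ K := fun x hx => by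
    rw [hKsymm] at hx
    exact hx
  have h0 : K ∈ nhds 0 := by
    obtain ⟨x, hx⟩ := hKint
    have hx' : -x ∈ K := hsymm x (interior_subset hx)
    have h := hKconv.combo_interior_self_mem_interior hx hx' (a := 1 / 2) (b := 1 / 2)
      (by norm_num) (by norm_num) (by norm_num)
    rw [smul_neg, add_neg_cancel] at h
    exact mem_interior_iff_mem_nhds.1 h
  have hneg : ∀ x, gauge K (-x) = gauge K x := gauge_neg hsymm
  have hpos : ∀ x, x ≠ 0 → 0 < gauge K x := fun x hx =>
    (gauge_pos (absorbent_nhds_zero h0)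
      (NormedSpace.isVonNBounded_of_isBounded ℝ hKcomp.isBounded)).2 hx
  obtain ⟨u, v, hu, hv, huv⟩ := exists_unit_triangle hKconv h0 hneg hpos
  have H := hexagon_dist hKconv h0 hneg hu hv huv
  generalize (![0, u, v, v - u, -u, -v, u - v] : Fin 7 → Fin 2 → ℝ) = c at H
  refine ⟨c, fun i j hij => ?_, fun i j hij => ⟨?_, ?_⟩⟩
  · by_contra hne
    have h := (H i j hne).1
    rw [hij, sub_self, gauge_zero] at h
    norm_num at h
  · -- The midpoint of the two centres lies in both translates.
    have half_mem : ∀ k l, k ≠ l → (1 / 2 : ℝ) • (c k - c l) ∈ K := fun k l hkl => by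
      rw [← hKcomp.isClosed.closure_eq, ← gauge_le_one_iff_mem_closure hKconv h0,
        gauge_smul_of_nonneg (by norm_num), smul_eq_mul]
      linarith [(H k l hkl).2]
    refine ⟨(1 / 2 : ℝ) • (c i + c j), ⟨_, half_mem j i hij.symm, ?_⟩, ⟨_, half_mem i j hij, ?_⟩⟩
    · simp only [vadd_eq_add]
      module
    · simp only [vadd_eq_add]
      module
  · rw [interior_vadd, Set.mem_vadd_set_iff_neg_vadd_mem, vadd_eq_add, neg_add_eq_sub,
      ← gauge_lt_one_iff_mem_interior hKconv h0, not_lt]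
    exact (H j i hij.symm).1
end

section
/- Let K be a centrally symmetric convex body in ℝ^d (a compact convex set with nonempty interior satisfying K = −K), let 0 ≤ μ ≤ 1, and let c_1, …, c_n be pairwise distinct points of ℝ^d such that for all i ≠ j the translates K + c_i and K + c_j intersect, while the interior of K + c_i is disjoint from the μ-kernel μ • K + c_j. Then n ≤ (1 + 2/(1+μ))^d. -/
/-!
In the norm `p` with unit ball `K`, the hypotheses say that the `c i` have pairwise distances in
`[1 + μ, 2]`: they are at most `2` because the translates meet, and at least `1 + μ` because
otherwise the point dividing the segment from `c i` to `c j` in the ratio `1 : μ` lies both in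
`interior (K + c i)` and in `μ • K + c j`.

The bound for such points is a Danzer–Grünbaum type volume argument (`card_le_of_separated`).
The convex hull `C` of the points has `p`-diameter at most `2`. For `s > 0` let `T` be the open
`s`-neighbourhood of `C`, which has positive finite volume and `p`-diameter at most `2 + 2 s`. The
homothets of `T` centred at the `c i`, of ratio `t = m / (2 + 2 s + m)` with `m = 1 + μ`, lie in
`T` and are pairwise disjoint, whence `n * t ^ d ≤ 1` (`card_mul_pow_le_one`). Letting `s → 0`
gives `n ≤ (1 + 2 / m) ^ d`. Passing to the neighbourhood avoids a separate treatment of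
configurations that do not affinely span the space.
-/

open Pointwise

open MeasureTheory in
/-- The volume comparison between the `s`-neighbourhood of the convex hull of the points and its
homothets centred at the points. -/
theorem card_mul_pow_le_one_s6 {d n : ℕ} (p : Seminorm ℝ (Fin d → ℝ)) (hpc : Continuous p)
    (hpb : Bornology.IsBounded (p.ball 0 1)) {m : ℝ} (hm : 0 < m)
    (c : Fin n → (Fin d → ℝ)) (h1 : ∀ i j, i ≠ j → m ≤ p (c i - c j))
    (h2 : ∀ i j, p (c i - c j) ≤ 2) {s : ℝ} (hs : 0 < s) :
    (n : ℝ) * (m / (2 + 2 * s + m)) ^ d ≤ 1 := by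
  rcases Nat.eq_zero_or_pos n with rfl | hn
  · simp
  set t := m / (2 + 2 * s + m) with ht
  have ht0 : 0 < t := by positivity
  have ht1 : t < 1 := by rw [ht, div_lt_one (by positivity)]; linarith
  have htm : (1 - t) * m = t * (2 + 2 * s) := by rw [ht]; field_simp; ring
  set C := convexHull ℝ (Set.range c) with hC
  have hCconv : Convex ℝ C := convex_convexHull _ _
  have hcC : ∀ i, c i ∈ C := fun i => subset_convexHull _ _ ⟨i, rfl⟩
  have hdiam : ∀ x ∈ C, ∀ y ∈ C, p (x - y) ≤ 2 := by
    have hstep : ∀ j, ∀ x ∈ C, p (x - c j) ≤ 2 := by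
      intro j x hx
      have hsub : C ⊆ p.closedBall (c j) 2 := convexHull_min
        (by rintro _ ⟨i, rfl⟩; exact (p.mem_closedBall).2 (h2 i j)) (p.convex_closedBall _ _)
      exact (p.mem_closedBall).1 (hsub hx)
    intro x hx y hy
    have hsub : C ⊆ p.closedBall x 2 := convexHull_min
      (by
        rintro _ ⟨i, rfl⟩
        rw [p.mem_closedBall, map_sub_rev]
        exact hstep i x hx) (p.convex_closedBall _ _)
    rw [map_sub_rev]
    exact (p.mem_closedBall).1 (hsub hy)
  set T := C + p.ball 0 s with hT
  have hball : IsOpen (p.ball 0 s) := by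
    have : p.ball 0 s = p ⁻¹' Set.Iio s := by ext x; simp [p.mem_ball]
    rw [this]
    exact isOpen_Iio.preimage hpc
  have hTopen : IsOpen T := hball.add_left
  have hTne : T.Nonempty :=
    ⟨c ⟨0, hn⟩ + 0, Set.add_mem_add (hcC _) (by simpa [p.mem_ball] using hs)⟩
  have hTbd : Bornology.IsBounded T := by
    refine Bornology.IsBounded.add ?_ ?_
    · exact isBounded_convexHull.2 (Set.finite_range c).isBounded
    · refine (hpb.smul₀ s).subset fun x hx => ?_
      rw [Set.mem_smul_set_iff_inv_smul_mem₀ hs.ne', p.mem_ball_zero, map_smul_eq_mul,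
        Real.norm_eq_abs, abs_of_pos (inv_pos.2 hs), inv_mul_lt_one₀ hs]
      exact (p.mem_ball_zero).1 hx
  have hvol0 : volume T ≠ 0 := (hTopen.measure_pos _ hTne).ne'
  have hvolT : volume T ≠ ⊤ := hTbd.measure_lt_top.ne
  let S : Fin n → Set (Fin d → ℝ) := fun i => AffineMap.homothety (c i) t '' T
  have hSopen : ∀ i, IsOpen (S i) := fun i =>
    (AffineMap.homothety_isOpenMap (c i) t ht0.ne') T hTopen
  have hSsub : ∀ i, S i ⊆ T := by
    rintro i _ ⟨_, ⟨a, ha, u, hu, rfl⟩, rfl⟩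
    refine ⟨(1 - t) • c i + t • a, hCconv (hcC i) ha (by linarith) ht0.le (by ring), t • u, ?_, ?_⟩
    · rw [p.mem_ball_zero] at hu ⊢
      rw [map_smul_eq_mul, Real.norm_eq_abs, abs_of_pos ht0]
      nlinarith [apply_nonneg p u]
    · simp only [AffineMap.homothety_apply, vsub_eq_sub, vadd_eq_add]
      module
  have hSdisj : Pairwise (Function.onFun Disjoint S) := by
    intro i j hij
    rw [Function.onFun, Set.disjoint_left]
    rintro _ ⟨_, ⟨a, ha, u, hu, rfl⟩, rfl⟩ ⟨_, ⟨b, hb, v, hv, rfl⟩, hxy⟩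
    rw [p.mem_ball_zero] at hu hv
    simp only [AffineMap.homothety_apply, vsub_eq_sub, vadd_eq_add] at hxy
    have key : (1 - t) • (c i - c j) = t • ((b - a) + (v - u)) := by
      linear_combination (norm := module) -hxy
    have hp := congrArg p key
    rw [map_smul_eq_mul, map_smul_eq_mul, Real.norm_eq_abs, Real.norm_eq_abs, abs_of_pos ht0,
      abs_of_pos (by linarith)] at hp
    have e1 := map_add_le_add p (b - a) (v - u)
    have e2 := hdiam b hb a ha
    have e3 := map_sub_le_add p v u
    have e4 := mul_le_mul_of_nonneg_left (h1 i j hij) (by linarith : 0 ≤ 1 - t)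
    have e5 : t * p ((b - a) + (v - u)) < t * (2 + 2 * s) :=
      mul_lt_mul_of_pos_left (by linarith) ht0
    linarith
  have hsum : ∑ i, volume (S i) ≤ volume T := by
    rw [← tsum_fintype (L := .unconditional _) (fun i => volume (S i)),
      ← measure_iUnion hSdisj fun i => (hSopen i).measurableSet]
    exact measure_mono (Set.iUnion_subset hSsub)
  have hS : ∀ i, volume (S i) = ENNReal.ofReal (t ^ d) * volume T := by
    intro i
    rw [Measure.addHaar_image_homothety, Module.finrank_fin_fun, abs_of_pos (by positivity)]
  simp only [hS, Finset.sum_const, Finset.card_univ, Fintype.card_fin, nsmul_eq_mul] at hsum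
  have hreal := ENNReal.toReal_mono hvolT hsum
  rw [ENNReal.toReal_mul, ENNReal.toReal_mul, ENNReal.toReal_natCast,
    ENNReal.toReal_ofReal (by positivity), ← mul_assoc] at hreal
  have hpos : 0 < (volume T).toReal := ENNReal.toReal_pos hvol0 hvolT
  exact le_of_mul_le_mul_right (by linarith) hpos

/-- Points with pairwise `p`-distances between `m` and `2` number at most `(1 + 2 / m) ^ d`. -/
theorem card_le_of_separated {d n : ℕ} (p : Seminorm ℝ (Fin d → ℝ)) (hpc : Continuous p)
    (hpb : Bornology.IsBounded (p.ball 0 1)) {m : ℝ} (hm : 0 < m)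
    (c : Fin n → (Fin d → ℝ)) (h1 : ∀ i j, i ≠ j → m ≤ p (c i - c j))
    (h2 : ∀ i j, p (c i - c j) ≤ 2) : (n : ℝ) ≤ (1 + 2 / m) ^ d := by
  have hle : (n : ℝ) * (m / (2 + 2 * (0 : ℝ) + m)) ^ d ≤ 1 := by
    have hcont : ContinuousAt (fun s : ℝ => (n : ℝ) * (m / (2 + 2 * s + m)) ^ d) 0 := by
      have : (2 + 2 * (0 : ℝ) + m) ≠ 0 := by positivity
      fun_prop (disch := assumption)
    refine le_of_tendsto (hcont.tendsto.mono_left nhdsWithin_le_nhds)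
      (Filter.mem_of_superset (self_mem_nhdsWithin (s := Set.Ioi (0 : ℝ))) fun s hs => ?_)
    exact card_mul_pow_le_one_s6 p hpc hpb hm c h1 h2 hs
  have hinv : 1 + 2 / m = (m / (2 + 2 * (0 : ℝ) + m))⁻¹ := by field_simp; ring
  rw [hinv, inv_pow, ← one_div, le_div_iff₀ (by positivity)]
  exact hle

/-- A pairwise intersecting Minkowski arrangement of order `μ` of translates of
a centrally symmetric convex body `K` in `ℝ^d` has at most `(1 + 2/(1+μ))^d`
members. -/
theorem stmt6 {d n : ℕ} (K : Set (Fin d → ℝ))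
    (hKcomp : IsCompact K) (hKconv : Convex ℝ K)
    (hKint : (interior K).Nonempty) (hKsymm : K = -K)
    (μ : ℝ) (hμ0 : 0 ≤ μ) (hμ1 : μ ≤ 1)
    (c : Fin n → (Fin d → ℝ)) (hinj : Function.Injective c)
    (h : ∀ i j : Fin n, i ≠ j →
      ((c i +ᵥ K) ∩ (c j +ᵥ K)).Nonempty ∧
      interior (c i +ᵥ K) ∩ (c j +ᵥ μ • K) = ∅) :
    (n : ℝ) ≤ (1 + 2 / (1 + μ)) ^ d := by
  have hneg : ∀ x ∈ K, -x ∈ K := fun x hx => by rw [hKsymm] at hx; exact hx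
  have h0int : (0 : Fin d → ℝ) ∈ interior K := by
    obtain ⟨x, hx⟩ := hKint
    -- `0` is the midpoint of `x` and `-x`.
    have := hKconv.combo_interior_self_mem_interior hx (hneg x (interior_subset hx))
      (a := 1 / 2) (b := 1 / 2) (by norm_num) (by norm_num) (by norm_num)
    simpa using this
  have h0 : K ∈ nhds (0 : Fin d → ℝ) := mem_interior_iff_mem_nhds.1 h0int
  have hbal : Balanced ℝ K := by
    rw [balanced_iff_smul_mem]
    intro a ha x hx
    rw [Real.norm_eq_abs, abs_le] at ha
    -- `a • x` is a convex combination of `x` and `-x`.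
    have := hKconv hx (hneg x hx) (a := (1 + a) / 2) (b := (1 - a) / 2)
      (by linarith) (by linarith) (by ring)
    convert this using 1
    module
  let p : Seminorm ℝ (Fin d → ℝ) := gaugeSeminorm hbal hKconv (absorbent_nhds_zero h0)
  have hlt : ∀ x, p x < 1 ↔ x ∈ interior K := fun x =>
    Set.ext_iff.1 (setOfPred_gauge_lt_one_eq_interior hKconv h0) x
  have hle : ∀ x ∈ K, p x ≤ 1 := fun x hx => gauge_le_one_of_mem hx
  refine card_le_of_separated p (continuous_gauge hKconv h0) ?_ (by linarith) c ?_ ?_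
  · refine hKcomp.isBounded.subset fun x hx => interior_subset ((hlt x).1 ?_)
    exact (p.mem_ball_zero).1 hx
  · intro i j hij
    by_contra! hcon
    have hμ : 0 < 1 + μ := by linarith
    obtain ⟨w, hw⟩ : ∃ w, w = (1 + μ)⁻¹ • (c j - c i) := ⟨_, rfl⟩
    have hw1 : w ∈ interior K := by
      rw [← hlt, hw, map_smul_eq_mul, Real.norm_eq_abs, abs_of_pos (inv_pos.2 hμ),
        inv_mul_lt_one₀ hμ, map_sub_rev]
      exact hcon
    have hw2 : (1 + μ) • w = c j - c i := by rw [hw, smul_inv_smul₀ hμ.ne']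
    have hmem : c i + w ∈ interior (c i +ᵥ K) ∩ (c j +ᵥ μ • K) := by
      refine ⟨?_, ?_⟩
      · rw [interior_vadd]
        exact Set.vadd_mem_vadd_set hw1
      · refine ⟨μ • (-w), Set.smul_mem_smul_set (hneg w (interior_subset hw1)), ?_⟩
        simp only [vadd_eq_add]
        linear_combination (norm := module) -hw2
    rw [(h i j hij).2] at hmem
    exact hmem
  · intro i j
    rcases eq_or_ne i j with rfl | hij
    · simp
    obtain ⟨_, ⟨x, hx, rfl⟩, ⟨y, hy, hxy⟩⟩ := (h i j hij).1
    simp only [vadd_eq_add] at hxy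
    have e : c i - c j = y - x := by linear_combination (norm := module) -hxy
    rw [e]
    linarith [map_sub_le_add p y x, hle x hx, hle y hy]
end

section
/- For every real μ with 0 ≤ μ < √2 − 1 there exist a constant c > 1 and a natural number d₀ such that for every dimension d ≥ d₀ there exists a finite set S of at least c^d points in Euclidean space ℝ^d whose pairwise Euclidean distances all lie in the interval [1 + μ, 2]. -/
/-!
Vertices of a scaled cube suffice. Encode a vertex as a subset of `Fin d`; the squared distance of
two vertices of the cube with side `√(6/d)` is `6/d` times the size of the symmetric difference.
Hence a family of subsets whose pairwise symmetric differences have size in `[d/3, 2d/3]` gives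
points with pairwise distances in `[√2, 2]`, and `1 + μ < √2`.

Exponentially large families of this kind exist by the Gilbert–Varshamov argument
(`exists_large_family`): a maximal family `S` satisfies `2^d ≤ |S| * |badSets d|`, where
`badSets d` consists of the sets of size outside `[d/3, 2d/3]`. A Chernoff-type estimate with
weight `(4/5)^3` per element (`card_badSets_le`) gives `|badSets d| ≤ 2 * (189/100)^d`, and
`189/100 < 2`.
-/

open scoped symmDiff

/-- The subsets of `Fin d` whose cardinality lies outside `[d/3, 2d/3]`. -/
def badSets (d : ℕ) : Finset (Finset (Fin d)) :=
  Finset.univ.filter fun A => 3 * A.card < d ∨ 2 * d < 3 * A.card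

/-- Exponential tail bound: `t ^ |A| + t ^ (d - |A|)` with `t = (4/5)^3` sums to `2 * (1 + t)^d` over
all `A`, and is at least `(4/5)^d` on each bad set. -/
lemma card_badSets_le (d : ℕ) : ((badSets d).card : ℝ) ≤ 2 * (189 / 100 : ℝ) ^ d := by
  have h1 := Fintype.sum_pow_mul_eq_add_pow (Fin d) ((4 / 5 : ℝ) ^ 3) 1
  have h2 := Fintype.sum_pow_mul_eq_add_pow (Fin d) 1 ((4 / 5 : ℝ) ^ 3)
  simp only [Fintype.card_fin, one_pow, mul_one, one_mul] at h1 h2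
  have h3 : ∑ _A ∈ badSets d, (4 / 5 : ℝ) ^ d ≤
      ∑ A : Finset (Fin d), ((((4 / 5 : ℝ) ^ 3) ^ A.card) + ((4 / 5 : ℝ) ^ 3) ^ (d - A.card)) := by
    refine (Finset.sum_le_sum fun A hA => ?_).trans
      (Finset.sum_le_sum_of_subset_of_nonneg (Finset.subset_univ (badSets d))
        fun A _ _ => by positivity)
    simp only [badSets, Finset.mem_filter, Finset.mem_univ, true_and] at hA
    have hAd : A.card ≤ d := by simpa using A.card_le_univ
    rw [← pow_mul, ← pow_mul]
    have p1 : (0 : ℝ) ≤ (4 / 5) ^ (3 * A.card) := by positivity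
    have p2 : (0 : ℝ) ≤ (4 / 5) ^ (3 * (d - A.card)) := by positivity
    rcases hA with h | h
    · have : (4 / 5 : ℝ) ^ d ≤ (4 / 5) ^ (3 * A.card) :=
        pow_le_pow_of_le_one (by norm_num) (by norm_num) h.le
      linarith
    · have : (4 / 5 : ℝ) ^ d ≤ (4 / 5) ^ (3 * (d - A.card)) :=
        pow_le_pow_of_le_one (by norm_num) (by norm_num) (by omega)
      linarith
  rw [Finset.sum_add_distrib, h1, h2, Finset.sum_const, nsmul_eq_mul] at h3
  have h4 : (189 / 100 : ℝ) ^ d * (4 / 5) ^ d = (189 / 125) ^ d := by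
    rw [← mul_pow]; norm_num
  have h5 : (0 : ℝ) < (4 / 5) ^ d := by positivity
  norm_num at h3
  refine le_of_mul_le_mul_right ?_ h5
  rw [mul_assoc, h4]
  linarith

/-- Gilbert–Varshamov bound: by maximality, translates of `badSets d` by the members of a maximal
family cover all subsets. -/
lemma exists_large_family (d : ℕ) (hd : 0 < d) :
    ∃ S : Finset (Finset (Fin d)), 2 ^ d ≤ S.card * (badSets d).card ∧
      ∀ A ∈ S, ∀ B ∈ S, A ≠ B → A ∆ B ∉ badSets d := by
  classical
  let F : Finset (Finset (Finset (Fin d))) :=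
    Finset.univ.filter fun S => ∀ A ∈ S, ∀ B ∈ S, A ≠ B → A ∆ B ∉ badSets d
  obtain ⟨S, hS, hmax⟩ := F.exists_max_image Finset.card ⟨∅, by simp [F]⟩
  have hS' : ∀ A ∈ S, ∀ B ∈ S, A ≠ B → A ∆ B ∉ badSets d := by simpa [F] using hS
  refine ⟨S, ?_, hS'⟩
  have hcov : (Finset.univ : Finset (Finset (Fin d))) ⊆
      S.biUnion fun A => (badSets d).image fun C => A ∆ C := by
    intro B _
    simp only [Finset.mem_biUnion, Finset.mem_image]
    suffices h : ∃ A ∈ S, A ∆ B ∈ badSets d by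
      obtain ⟨A, hA, hAB⟩ := h
      exact ⟨A, hA, A ∆ B, hAB, symmDiff_symmDiff_cancel_left A B⟩
    by_contra! hB
    have hBS : B ∉ S := fun h => hB B h (by simp [badSets, hd])
    have hins : insert B S ∈ F := by
      simp only [F, Finset.mem_filter, Finset.mem_univ, true_and, Finset.mem_insert]
      rintro A (rfl | hA) C (rfl | hC) hAC
      · exact absurd rfl hAC
      · rw [symmDiff_comm]; exact hB C hC
      · exact hB A hA
      · exact hS' A hA C hC hAC
    have := hmax _ hins
    rw [Finset.card_insert_of_notMem hBS] at this
    omega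
  have := (Finset.card_le_card hcov).trans
    (Finset.card_biUnion_le_card_mul _ _ (badSets d).card fun A _ => Finset.card_image_le)
  simpa using this

/-- The vertex of the cube `[0, √(6/d)]^d` with support `A`. -/
noncomputable def cubePoint (d : ℕ) (A : Finset (Fin d)) : EuclideanSpace ℝ (Fin d) :=
  WithLp.toLp 2 fun i => if i ∈ A then √(6 / d) else 0

lemma dist_cubePoint_sq (d : ℕ) (A B : Finset (Fin d)) :
    dist (cubePoint d A) (cubePoint d B) ^ 2 = 6 / d * (A ∆ B).card := by
  rw [EuclideanSpace.dist_eq, Real.sq_sqrt (by positivity)]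
  have h : ∀ i, dist (cubePoint d A i) (cubePoint d B i) ^ 2
      = if i ∈ A ∆ B then (6 / d : ℝ) else 0 := by
    intro i
    have hs : √(6 / d : ℝ) ^ 2 = 6 / d := Real.sq_sqrt (by positivity)
    simp only [cubePoint, Real.dist_eq, sq_abs, Finset.mem_symmDiff]
    generalize √(6 / d : ℝ) = s at hs ⊢
    by_cases h1 : i ∈ A <;> by_cases h2 : i ∈ B <;> simp [h1, h2, hs]
  simp only [h, Finset.sum_ite_mem, Finset.univ_inter, Finset.sum_const, nsmul_eq_mul]
  ring

/-- For `d = 0` the side length is the junk value `√(6/0) = 0`, but then there is only one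
subset. -/
lemma cubePoint_injective (d : ℕ) : Function.Injective (cubePoint d) := by
  intro A B hAB
  rcases Nat.eq_zero_or_pos d with rfl | hd
  · exact Subsingleton.elim _ _
  have h := dist_cubePoint_sq d A B
  have hd' : (d : ℝ) ≠ 0 := by positivity
  rw [hAB, dist_self] at h
  simpa [hd', ← Finset.bot_eq_empty] using h.symm

theorem stmt7 (μ : ℝ) (hμ0 : 0 ≤ μ) (hμ1 : μ < Real.sqrt 2 - 1) :
    ∃ (c : ℝ) (d₀ : ℕ), 1 < c ∧ ∀ d : ℕ, d₀ ≤ d →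
      ∃ S : Finset (EuclideanSpace ℝ (Fin d)),
        c ^ d ≤ (S.card : ℝ) ∧
        ∀ x ∈ S, ∀ y ∈ S, x ≠ y → dist x y ∈ Set.Icc (1 + μ) 2 := by
  classical
  -- Any `c < 200/189` works; the surplus factor `(200/(189 c))^d` absorbs the constant `2`.
  obtain ⟨n, hn⟩ := pow_unbounded_of_one_lt (2 : ℝ) (show (1 : ℝ) < 20000 / 19089 by norm_num)
  refine ⟨101 / 100, n + 1, by norm_num, fun d hd => ?_⟩
  obtain ⟨S, hcard, hS⟩ := exists_large_family d (by omega)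
  refine ⟨S.image (cubePoint d), ?_, ?_⟩
  · rw [Finset.card_image_of_injective _ (cubePoint_injective d)]
    have hcard' : (2 : ℝ) ^ d ≤ S.card * (badSets d).card := by exact_mod_cast hcard
    have h1 : (2 : ℝ) ^ d ≤ S.card * (2 * (189 / 100 : ℝ) ^ d) :=
      hcard'.trans (mul_le_mul_of_nonneg_left (card_badSets_le d) (by positivity))
    have h2 : (2 : ℝ) ≤ (20000 / 19089) ^ d :=
      hn.le.trans (pow_le_pow_right₀ (by norm_num) (by omega))
    have h3 : (2 : ℝ) ^ d = (20000 / 19089) ^ d * ((101 / 100) ^ d * (189 / 100) ^ d) := by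
      rw [← mul_pow, ← mul_pow]; norm_num
    have h4 : (0 : ℝ) < 2 * (189 / 100) ^ d := by positivity
    refine le_of_mul_le_mul_right (le_trans ?_ h1) h4
    have h5 := mul_le_mul_of_nonneg_right h2
      (show (0 : ℝ) ≤ (101 / 100) ^ d * (189 / 100) ^ d by positivity)
    rw [h3]
    linarith
  · intro x hx y hy hxy
    obtain ⟨A, hA, rfl⟩ := Finset.mem_image.1 hx
    obtain ⟨B, hB, rfl⟩ := Finset.mem_image.1 hy
    have hgood := hS A hA B hB fun h => hxy (h ▸ rfl)
    simp only [badSets, Finset.mem_filter, Finset.mem_univ, true_and, not_or, not_lt] at hgood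
    have hd0 : (0 : ℝ) < d := by exact_mod_cast (show 0 < d by omega)
    have g1 : (d : ℝ) ≤ 3 * (A ∆ B).card := by exact_mod_cast hgood.1
    have g2 : 3 * ((A ∆ B).card : ℝ) ≤ 2 * d := by exact_mod_cast hgood.2
    have hsq := dist_cubePoint_sq d A B
    rw [div_mul_eq_mul_div] at hsq
    have lo : 2 ≤ dist (cubePoint d A) (cubePoint d B) ^ 2 := by
      rw [hsq, le_div_iff₀ hd0]; linarith
    have hi : dist (cubePoint d A) (cubePoint d B) ^ 2 ≤ 2 ^ 2 := by
      rw [hsq, div_le_iff₀ hd0]; linarith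
    refine ⟨?_, le_of_sq_le_sq hi (by norm_num)⟩
    have := Real.sqrt_le_iff.2 ⟨dist_nonneg, lo⟩
    linarith
end

section
/- Let K be a convex body in ℝ² (a compact convex set with nonempty interior). Then there exist four pairwise touching positive homothetic copies of K, i.e., sets K_i = λ_i • K + t_i (i = 1,2,3,4) with λ_i > 0 such that for all i ≠ j the sets K_i and K_j intersect but their interiors are disjoint. -/
open Pointwise

/-!
The argument splits into two parts.

*Filling a gap.* Let `A`, `B`, `C` be compact convex sets, pairwise intersecting but without a
common point; choose `a ∈ A ∩ B`, `b ∈ A ∩ C`, `c ∈ B ∩ C` and let `T` be the triangle `abc`.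
The sets do not cover `T` (`exists_mem_triangle_notMem`, an instance of Berge's theorem on convex
unions), so the compact set `G = T \ (int A ∪ int B ∪ int C)` has interior points, and there is a
largest homothet `P` of `K` contained in `G`. It meets all three sets: if `P` missed `C`, say, then
dilating `P` slightly from `a` would give a larger homothet in `G` (`exists_dilation_subset`).
Indeed such a dilation cannot push `P` into the interior of the convex sets `A`, `B` containing
`a`, nor through the sides `ab`, `ac`, and `P` has positive distance from `C`, which contains the
side `bc`.

*Finding a gap.* Let `D = K - K`, with gauge `g`, which is a norm. Let `v` be an extreme point of
`D`; then `K ∩ (v + K)` is a single point. By the intermediate value theorem there is `u` with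
`g u = g (u - v) = 1`. The translates of `K` by `0, v, u` touch pairwise, and so do those by
`0, v, v - u`. If one of the two triples has no common point, its gap can be filled. Otherwise all
of `K`, `v + K`, `u + K`, `v - u + K` contain the single point of `K ∩ (v + K)`, and the last two
have disjoint interiors because `g (2 u - v) ≥ 2 g u - g v ≥ 1`.
-/

/-! ### Filling the gap between three convex sets -/

/-- Berge's theorem for three sets: compact convex sets that contain the three sides of a triangle
and have no common point do not cover the triangle. -/
lemma exists_mem_triangle_notMem {A B C : Set (Fin 2 → ℝ)}
    (hA : IsCompact A) (hB : IsCompact B) (hC : IsCompact C)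
    (hAc : Convex ℝ A) (hBc : Convex ℝ B) (hCc : Convex ℝ C)
    (h0 : ∀ x ∈ A, x ∈ B → x ∉ C) {a b c : Fin 2 → ℝ}
    (haA : a ∈ A) (haB : a ∈ B) (hbA : b ∈ A) (hbC : b ∈ C) (hcB : c ∈ B) (hcC : c ∈ C) :
    ∃ x ∈ convexHull ℝ {a, b, c}, x ∉ A ∧ x ∉ B ∧ x ∉ C := by
  by_contra! hcov
  obtain ⟨f, u, w, hf1, huw, hf2⟩ := geometric_hahn_banach_compact_closed
    (hAc.inter hBc) (hA.inter hB) hCc hC.isClosed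
    (Set.disjoint_left.2 fun x hx hxC => h0 x hx.1 hx.2 hxC)
  set T := convexHull ℝ {a, b, c} with hT
  have haT : a ∈ T := subset_convexHull ℝ _ (by simp)
  have hbT : b ∈ T := subset_convexHull ℝ _ (by simp)
  have hcT : c ∈ T := subset_convexHull ℝ _ (by simp)
  have hTc : Convex ℝ T := convex_convexHull ℝ _
  have hfa := hf1 a ⟨haA, haB⟩
  have hfb := hf2 b hbC
  have hfc := hf2 c hcC
  -- On the chord cut from the triangle by a line separating `A ∩ B` from `C`, only `A` and `B`
  -- are left to cover, so connectedness of the chord forces them to meet on it.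
  have hL : IsPreconnected (T ∩ {x | f x = u}) :=
    (hTc.inter (convex_hyperplane f.toLinearMap.isLinear u)).isPreconnected
  have ivt : ∀ S : Set (Fin 2 → ℝ), Convex ℝ S → a ∈ S → ∀ d ∈ S, d ∈ T → w < f d →
      (T ∩ {x | f x = u} ∩ S).Nonempty := by
    intro S hS haS d hd hdT hfd
    obtain ⟨x, hx, hxu⟩ := (hTc.inter hS).isPreconnected.intermediate_value
      (f := f) ⟨haT, haS⟩ ⟨hdT, hd⟩ f.continuous.continuousOn ⟨hfa.le, (huw.trans hfd).le⟩
    exact ⟨x, ⟨hx.1, hxu⟩, hx.2⟩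
  obtain ⟨x, ⟨hxT, hxu⟩, hxA, hxB⟩ := isPreconnected_closed_iff.1 hL A B hA.isClosed hB.isClosed
    (by
      rintro x ⟨hxT, hxu⟩
      by_contra hx
      rw [Set.mem_union, not_or] at hx
      have := hf2 x (hcov x hxT hx.1 hx.2)
      simp only [Set.mem_ofPred_eq] at hxu
      linarith)
    (ivt A hAc haA b hbA hbT hfb) (ivt B hBc haB c hcB hcT hfc)
  have := hf1 x ⟨hxA, hxB⟩
  simp only [Set.mem_ofPred_eq] at hxu
  linarith

/-- A compact subset of the gap that misses `C` can be dilated a little from the opposite vertex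
`a` without leaving the gap. -/
lemma exists_dilation_subset {A B C P : Set (Fin 2 → ℝ)}
    (hC : IsCompact C) (hP : IsCompact P)
    (hAc : Convex ℝ A) (hBc : Convex ℝ B) (hCc : Convex ℝ C) {a b c : Fin 2 → ℝ}
    (haA : a ∈ A) (haB : a ∈ B) (hbC : b ∈ C) (hcC : c ∈ C)
    (hPG : ∀ x ∈ P, x ∈ convexHull ℝ {a, b, c} ∧ x ∉ interior A ∧ x ∉ interior B)
    (hPC : Disjoint P C) :
    ∃ ε : ℝ, 0 < ε ∧ ∀ x ∈ P, a + (1 + ε) • (x - a) ∈ convexHull ℝ {a, b, c} ∧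
      a + (1 + ε) • (x - a) ∉ interior A ∧ a + (1 + ε) • (x - a) ∉ interior B ∧
      a + (1 + ε) • (x - a) ∉ C := by
  obtain ⟨d, hd, hdist⟩ : ∃ d : ℝ, 0 < d ∧ ∀ x ∈ P, ∀ y ∈ C, d < dist x y := by
    obtain ⟨d, hd, h⟩ := Metric.exists_pos_forall_lt_edist hP hC.isClosed hPC
    refine ⟨d, hd, fun x hx y hy => ?_⟩
    have := h x hx y hy
    rw [edist_nndist] at this
    exact_mod_cast this
  set T := convexHull ℝ {a, b, c} with hT
  have hTb : Bornology.IsBounded T :=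
    (isBounded_convexHull).2 ((Set.toFinite {a, b, c}).isBounded)
  obtain ⟨D, hD0, hD⟩ : ∃ D : ℝ, 0 < D ∧ ∀ x ∈ T, ∀ y ∈ T, dist x y ≤ D := by
    obtain ⟨D, hD⟩ := Metric.isBounded_iff.1 hTb
    exact ⟨max D 1, by positivity, fun x hx y hy => (hD hx hy).trans (le_max_left _ _)⟩
  have haT : a ∈ T := subset_convexHull ℝ _ (by simp)
  have hε : 0 < d / D := by positivity
  refine ⟨d / D, hε, fun x hx => ⟨?_, ?_, ?_, ?_⟩⟩
  · have hxT := (hPG x hx).1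
    rw [hT, convexHull_insert (by simp), convexHull_pair, mem_convexJoin] at hxT
    obtain ⟨a', ha', z, hz, hxz⟩ := hxT
    obtain rfl : a' = a := ha'
    have hzC : z ∈ C := hCc.segment_subset hbC hcC hz
    have hzT : z ∈ T := by
      have : segment ℝ b c ⊆ T := by
        rw [← convexHull_pair]
        exact convexHull_mono (by intro; simp; tauto)
      exact this hz
    rw [segment_eq_image'] at hxz
    obtain ⟨s, ⟨hs0, hs1⟩, rfl⟩ := hxz
    -- The distance of `x` from `z ∈ C` keeps `s` away from `1`.
    have h1 : d < (1 - s) * D := by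
      have h2 := hdist _ hx z hzC
      have h3 : dist (a' + s • (z - a')) z = (1 - s) * dist a' z := by
        rw [dist_eq_norm, dist_eq_norm,
          show a' + s • (z - a') - z = (1 - s) • (a' - z) by module, norm_smul,
          Real.norm_of_nonneg (by linarith)]
      rw [h3] at h2
      exact h2.trans_le (mul_le_mul_of_nonneg_left (hD _ haT _ hzT) (by linarith))
    have h4 : d / D < 1 - s := by rwa [div_lt_iff₀ hD0]
    have h5 : (1 + d / D) * s ≤ 1 := by nlinarith
    have := (convex_convexHull ℝ {a', b, c}).add_smul_sub_mem haT hzT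
      (t := (1 + d / D) * s) ⟨by positivity, h5⟩
    convert this using 1
    module
  · intro hy
    refine (hPG x hx).2.1 ?_
    have := hAc.add_smul_sub_mem_interior haA hy (t := (1 + d / D)⁻¹)
      ⟨by positivity, inv_le_one_of_one_le₀ (by linarith)⟩
    rwa [add_sub_cancel_left, inv_smul_smul₀ (by positivity), add_sub_cancel] at this
  · intro hy
    refine (hPG x hx).2.2 ?_
    have := hBc.add_smul_sub_mem_interior haB hy (t := (1 + d / D)⁻¹)
      ⟨by positivity, inv_le_one_of_one_le₀ (by linarith)⟩
    rwa [add_sub_cancel_left, inv_smul_smul₀ (by positivity), add_sub_cancel] at this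
  · intro hy
    have h1 := hdist x hx _ hy
    have h2 : dist x (a + (1 + d / D) • (x - a)) = d / D * dist x a := by
      rw [dist_comm, dist_eq_norm, dist_eq_norm,
        show a + (1 + d / D) • (x - a) - x = (d / D) • (x - a) by module, norm_smul,
        Real.norm_of_nonneg hε.le]
    have h3 : d / D * dist x a ≤ d / D * D :=
      mul_le_mul_of_nonneg_left (hD _ (hPG x hx).1 _ haT) hε.le
    rw [div_mul_cancel₀ _ hD0.ne'] at h3
    linarith

/-- Among the homothets of `K` inside a compact set `G` with nonempty interior there is a largest
one, and it is nondegenerate. The scale `0` is admitted as a competitor, so that the set of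
parameters is closed. -/
lemma exists_max_homothet {K G : Set (Fin 2 → ℝ)} (hK : K.Nontrivial) (hKb : IsCompact K)
    (hG : IsCompact G) (hGi : (interior G).Nonempty) :
    ∃ (m : ℝ) (t : Fin 2 → ℝ), 0 < m ∧ (∀ x ∈ K, t + m • x ∈ G) ∧
      ∀ (m' : ℝ) (t' : Fin 2 → ℝ), 0 ≤ m' → (∀ x ∈ K, t' + m' • x ∈ G) → m' ≤ m := by
  set S : Set (ℝ × (Fin 2 → ℝ)) := {p | 0 ≤ p.1 ∧ ∀ x ∈ K, p.2 + p.1 • x ∈ G} with hS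
  have hScl : IsClosed S := by
    have : S = {p | 0 ≤ p.1} ∩ ⋂ x ∈ K, {p | p.2 + p.1 • x ∈ G} := by
      ext p; simp [hS]
    rw [this]
    refine (isClosed_le continuous_const continuous_fst).inter (isClosed_biInter fun x _ => ?_)
    exact hG.isClosed.preimage (by fun_prop)
  obtain ⟨R, hR⟩ := hG.isBounded.exists_norm_le
  obtain ⟨x, hx, y, hy, hxy⟩ := hK
  have hn : 0 < ‖x - y‖ := norm_pos_iff.2 (sub_ne_zero.2 hxy)
  have hmb : ∀ p ∈ S, p.1 ≤ 2 * R / ‖x - y‖ := by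
    intro p hp
    rw [le_div_iff₀ hn]
    have h1 := hR _ (hp.2 x hx)
    have h2 := hR _ (hp.2 y hy)
    have h3 : p.1 * ‖x - y‖ = ‖(p.2 + p.1 • x) - (p.2 + p.1 • y)‖ := by
      rw [show (p.2 + p.1 • x) - (p.2 + p.1 • y) = p.1 • (x - y) by module, norm_smul,
        Real.norm_of_nonneg hp.1]
    rw [h3]
    exact (norm_sub_le _ _).trans (by linarith)
  have hSc : IsCompact S := by
    refine Metric.isCompact_of_isClosed_isBounded hScl ?_
    refine isBounded_iff_forall_norm_le.2
      ⟨max (2 * R / ‖x - y‖) (R + 2 * R / ‖x - y‖ * ‖x‖), fun p hp => ?_⟩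
    rw [Prod.norm_def]
    refine max_le_max ?_ ?_
    · rw [Real.norm_of_nonneg hp.1]; exact hmb p hp
    · have h1 := hR _ (hp.2 x hx)
      calc ‖p.2‖ = ‖(p.2 + p.1 • x) - p.1 • x‖ := by rw [add_sub_cancel_right]
        _ ≤ ‖p.2 + p.1 • x‖ + ‖p.1 • x‖ := norm_sub_le _ _
        _ ≤ R + 2 * R / ‖x - y‖ * ‖x‖ := by
          rw [norm_smul, Real.norm_of_nonneg hp.1]
          exact add_le_add h1 (mul_le_mul_of_nonneg_right (hmb p hp) (norm_nonneg _))
  obtain ⟨q, hq⟩ := hGi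
  obtain ⟨r, hr, hball⟩ := Metric.isOpen_iff.1 isOpen_interior q hq
  obtain ⟨M, hM⟩ := hKb.isBounded.exists_norm_le
  have hM0 : 0 ≤ M := (norm_nonneg x).trans (hM x hx)
  have hsmall : (r / (M + 1), q) ∈ S := by
    refine ⟨by positivity, fun z hz => interior_subset (hball ?_)⟩
    rw [mem_ball_iff_norm, add_sub_cancel_left, norm_smul, Real.norm_of_nonneg (by positivity),
      div_mul_eq_mul_div, div_lt_iff₀ (by linarith)]
    have := hM z hz
    nlinarith
  obtain ⟨p, hp, hmax⟩ := hSc.exists_isMaxOn ⟨_, hsmall⟩ continuous_fst.continuousOn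
  refine ⟨p.1, p.2, ?_, hp.2, fun m' t' h0 h => hmax (show (m', t') ∈ S from ⟨h0, h⟩)⟩
  exact lt_of_lt_of_le (by positivity) (hmax hsmall)

/-- Three pairwise intersecting compact convex sets without a common point leave a gap in which
some homothet of `K` touches all three. -/
lemma exists_homothet_touching {K A B C : Set (Fin 2 → ℝ)} (hK : K.Nontrivial)
    (hKb : IsCompact K)
    (hA : IsCompact A) (hB : IsCompact B) (hC : IsCompact C)
    (hAc : Convex ℝ A) (hBc : Convex ℝ B) (hCc : Convex ℝ C)
    (hAB : (A ∩ B).Nonempty) (hAC : (A ∩ C).Nonempty) (hBC : (B ∩ C).Nonempty)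
    (h0 : ∀ x ∈ A, x ∈ B → x ∉ C) :
    ∃ (m : ℝ) (t : Fin 2 → ℝ), 0 < m ∧
      ∀ S ∈ ({A, B, C} : Set (Set (Fin 2 → ℝ))), ((t +ᵥ m • K) ∩ S).Nonempty ∧
        interior (t +ᵥ m • K) ∩ interior S = ∅ := by
  obtain ⟨a, haA, haB⟩ := hAB
  obtain ⟨b, hbA, hbC⟩ := hAC
  obtain ⟨c, hcB, hcC⟩ := hBC
  set T := convexHull ℝ {a, b, c} with hT
  set G : Set (Fin 2 → ℝ) := T \ (interior A ∪ interior B ∪ interior C) with hG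
  have hTcomp : IsCompact T := (Set.toFinite {a, b, c}).isCompact_convexHull ℝ
  have hGc : IsCompact G :=
    hTcomp.diff ((isOpen_interior.union isOpen_interior).union isOpen_interior)
  -- If `a`, `b`, `c` were collinear, the middle one would be a common point.
  have hnc : ¬ Collinear ℝ {a, b, c} := by
    intro h
    rcases h.wbtw_or_wbtw_or_wbtw with h | h | h
    · exact h0 b hbA (hBc.segment_subset haB hcB (mem_segment_iff_wbtw.2 h)) hbC
    · exact h0 c (hAc.segment_subset hbA haA (mem_segment_iff_wbtw.2 h)) hcB hcC
    · exact h0 a haA haB (hCc.segment_subset hcC hbC (mem_segment_iff_wbtw.2 h))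
  have hTi : (interior T).Nonempty := by
    rw [hT, interior_convexHull_nonempty_iff_affineSpan_eq_top]
    have hai := affineIndependent_iff_not_collinear_set.2 hnc
    have := hai.affineSpan_eq_top_iff_card_eq_finrank_add_one.2 (by simp)
    rw [← this]
    congr 1
    ext; simp [Matrix.range_cons]; tauto
  have hGi : (interior G).Nonempty := by
    obtain ⟨x, hxT, hxA, hxB, hxC⟩ :=
      exists_mem_triangle_notMem hA hB hC hAc hBc hCc h0 haA haB hbA hbC hcB hcC
    have hcl : x ∈ closure (interior T) := by
      rw [(convex_convexHull ℝ _).closure_interior_eq_closure_of_nonempty_interior hTi]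
      exact subset_closure hxT
    have hU : IsOpen (A ∪ B ∪ C)ᶜ := ((hA.union hB).union hC).isClosed.isOpen_compl
    obtain ⟨y, hyU, hyT⟩ := mem_closure_iff.1 hcl _ hU (by simp [hxA, hxB, hxC])
    refine ⟨y, mem_interior.2 ⟨interior T ∩ (A ∪ B ∪ C)ᶜ, ?_, isOpen_interior.inter hU,
      hyT, hyU⟩⟩
    rintro z ⟨hz1, hz2⟩
    refine ⟨interior_subset hz1, fun hz => hz2 ?_⟩
    exact Set.union_subset_union (Set.union_subset_union interior_subset interior_subset)
      interior_subset hz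
  obtain ⟨m, t, hm, hmG, hmax⟩ := exists_max_homothet hK hKb hGc hGi
  set P := t +ᵥ m • K with hP
  have hPcomp : IsCompact P := (hKb.smul m).vadd t
  have hPmem : ∀ x ∈ K, t + m • x ∈ P := fun x hx =>
    Set.vadd_mem_vadd_set (Set.smul_mem_smul_set hx)
  have hPG : P ⊆ G := by
    rintro _ ⟨_, ⟨x, hx, rfl⟩, rfl⟩
    exact hmG x hx
  -- No dilation of the maximal homothet stays in the gap.
  have key : ∀ (p : Fin 2 → ℝ) (ε : ℝ), 0 < ε → (∀ x ∈ P, p + (1 + ε) • (x - p) ∈ G) → False := by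
    intro p ε hε h
    have := hmax ((1 + ε) * m) (p + (1 + ε) • (t - p)) (by positivity) fun x hx => by
      convert h _ (hPmem x hx) using 1
      module
    nlinarith
  have hPG' : ∀ x ∈ P, x ∈ T ∧ x ∉ interior A ∧ x ∉ interior B ∧ x ∉ interior C := by
    intro x hx
    have := hPG hx
    simpa [hG, not_or, and_assoc] using this
  have hTb : T = convexHull ℝ {b, a, c} := by rw [hT, Set.insert_comm]
  have hTc : T = convexHull ℝ {c, a, b} := by
    rw [hT, Set.insert_comm c, Set.pair_comm c]
  have tA : (P ∩ A).Nonempty := by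
    by_contra hne
    rw [← Set.disjoint_iff_inter_eq_empty.trans Set.not_nonempty_iff_eq_empty.symm] at hne
    obtain ⟨ε, hε, h⟩ := exists_dilation_subset hA hPcomp hBc hCc hAc hcB hcC haA hbA
      (fun x hx => ⟨hTc ▸ (hPG' x hx).1, (hPG' x hx).2.2⟩) hne
    refine key c ε hε fun x hx => ?_
    obtain ⟨h1, h2, h3, h4⟩ := h x hx
    rw [← hTc] at h1
    refine ⟨h1, ?_⟩
    rintro ((h | h) | h)
    exacts [h4 (interior_subset h), h2 h, h3 h]
  have tB : (P ∩ B).Nonempty := by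
    by_contra hne
    rw [← Set.disjoint_iff_inter_eq_empty.trans Set.not_nonempty_iff_eq_empty.symm] at hne
    obtain ⟨ε, hε, h⟩ := exists_dilation_subset hB hPcomp hAc hCc hBc hbA hbC haB hcB
      (fun x hx => ⟨hTb ▸ (hPG' x hx).1, (hPG' x hx).2.1, (hPG' x hx).2.2.2⟩) hne
    refine key b ε hε fun x hx => ?_
    obtain ⟨h1, h2, h3, h4⟩ := h x hx
    rw [← hTb] at h1
    refine ⟨h1, ?_⟩
    rintro ((h | h) | h)
    exacts [h2 h, h4 (interior_subset h), h3 h]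
  have tC : (P ∩ C).Nonempty := by
    by_contra hne
    rw [← Set.disjoint_iff_inter_eq_empty.trans Set.not_nonempty_iff_eq_empty.symm] at hne
    obtain ⟨ε, hε, h⟩ := exists_dilation_subset hC hPcomp hAc hBc hCc haA haB hbC hcC
      (fun x hx => ⟨(hPG' x hx).1, (hPG' x hx).2.1, (hPG' x hx).2.2.1⟩) hne
    refine key a ε hε fun x hx => ?_
    obtain ⟨h1, h2, h3, h4⟩ := h x hx
    refine ⟨h1, ?_⟩
    rintro ((h | h) | h)
    exacts [h2 h, h3 h, h4 (interior_subset h)]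
  refine ⟨m, t, hm, ?_⟩
  rintro S (rfl | rfl | rfl)
  · refine ⟨tA, Set.eq_empty_of_forall_notMem fun x hx => ?_⟩
    exact (hPG' x (interior_subset hx.1)).2.1 hx.2
  · refine ⟨tB, Set.eq_empty_of_forall_notMem fun x hx => ?_⟩
    exact (hPG' x (interior_subset hx.1)).2.2.1 hx.2
  · refine ⟨tC, Set.eq_empty_of_forall_notMem fun x hx => ?_⟩
    exact (hPG' x (interior_subset hx.1)).2.2.2 hx.2

/-! ### Touching translates and the difference body -/

lemma isCompact_sub_self {K : Set (Fin 2 → ℝ)} (hK : IsCompact K) : IsCompact (K - K) := by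
  rw [sub_eq_add_neg]
  exact hK.add hK.neg

lemma mem_translate_iff {K : Set (Fin 2 → ℝ)} {s x : Fin 2 → ℝ} :
    x ∈ s +ᵥ (1 : ℝ) • K ↔ x - s ∈ K := by
  rw [one_smul, Set.mem_vadd_set_iff_neg_vadd_mem, vadd_eq_add, neg_add_eq_sub]

lemma translates_inter_nonempty {K : Set (Fin 2 → ℝ)} (hKc : IsCompact K) (hK : Convex ℝ K)
    (h0 : K - K ∈ nhds (0 : Fin 2 → ℝ)) {s s' : Fin 2 → ℝ} (h : gauge (K - K) (s' - s) ≤ 1) :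
    ((s +ᵥ (1 : ℝ) • K) ∩ (s' +ᵥ (1 : ℝ) • K)).Nonempty := by
  rw [gauge_le_one_iff_mem_closure (hK.sub hK) h0, (isCompact_sub_self hKc).isClosed.closure_eq] at h
  obtain ⟨x, hx, y, hy, hxy⟩ := h
  simp only at hxy
  refine ⟨s + x, mem_translate_iff.2 (by simpa using hx), mem_translate_iff.2 ?_⟩
  convert hy using 1
  rw [show s' = s + (x - y) by rw [hxy]; abel]
  abel

lemma interior_translates_disjoint {K : Set (Fin 2 → ℝ)} (hK : Convex ℝ K)
    (h0 : K - K ∈ nhds (0 : Fin 2 → ℝ)) {s s' : Fin 2 → ℝ} (h : 1 ≤ gauge (K - K) (s' - s)) :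
    interior (s +ᵥ (1 : ℝ) • K) ∩ interior (s' +ᵥ (1 : ℝ) • K) = ∅ := by
  refine Set.eq_empty_of_forall_notMem fun x hx => ?_
  refine absurd ?_ (not_lt.2 h)
  rw [gauge_lt_one_iff_mem_interior (hK.sub hK) h0]
  rw [one_smul, interior_vadd, interior_vadd] at hx
  obtain ⟨⟨p, hp, hp'⟩, ⟨q, hq, hq'⟩⟩ := hx
  simp only [vadd_eq_add] at hp' hq'
  have : p - q ∈ interior K - K := Set.sub_mem_sub hp (interior_subset hq)
  have hpq : p - q = s' - s := by
    rw [← hq'] at hp'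
    rw [sub_eq_sub_iff_add_eq_add, add_comm p s, hp']
  rw [← hpq]
  exact subset_interior_sub_left this

/-- Some `v ≠ 0` in `K - K` makes `K` and `v + K` share exactly one point: an extreme point
of `K - K` is a difference of points of `K` in only one way. -/
lemma exists_single_contact {K : Set (Fin 2 → ℝ)} (hKc : IsCompact K)
    (hKn : K.Nontrivial) :
    ∃ v ∈ K - K, v ≠ 0 ∧ ∀ x ∈ K, ∀ y ∈ K, x - v ∈ K → y - v ∈ K → x = y := by
  obtain ⟨v, hv⟩ := (isCompact_sub_self hKc).extremePoints_nonempty (hKn.nonempty.sub hKn.nonempty)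
  have huniq : ∀ x ∈ K, ∀ y ∈ K, x - v ∈ K → y - v ∈ K → x = y := by
    intro x hx y hy hx' hy'
    have := hv.2 (Set.sub_mem_sub hx hy') (Set.sub_mem_sub hy hx')
      ⟨1 / 2, 1 / 2, by norm_num, by norm_num, by norm_num, by module⟩
    have h2 : x - y = (x - (y - v)) - v := by abel
    rw [← sub_eq_zero, h2, this, sub_self]
  refine ⟨v, hv.1, ?_, huniq⟩
  rintro rfl
  obtain ⟨x, hx, y, hy, hxy⟩ := hKn
  exact hxy (huniq x hx y hy (by simpa using hx) (by simpa using hy))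

/-- For the gauge of a bounded symmetric convex neighbourhood of `0` and a nonzero vector `v` of
gauge at most one, some vector of gauge one is at gauge distance one from `v`. -/
lemma exists_gauge_eq_one {D : Set (Fin 2 → ℝ)} (hD : Convex ℝ D) (h0 : D ∈ nhds 0)
    (hDb : Bornology.IsVonNBounded ℝ D) (hneg : ∀ x ∈ D, -x ∈ D) {v : Fin 2 → ℝ} (hv : v ≠ 0)
    (hv1 : gauge D v ≤ 1) :
    ∃ u, gauge D u = 1 ∧ gauge D (u - v) = 1 := by
  have hpos : ∀ x, x ≠ 0 → 0 < gauge D x := fun x hx =>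
    (gauge_pos (absorbent_nhds_zero h0) hDb).2 hx
  have hcont : Continuous (gauge D) := continuous_gauge hD h0
  -- The connected punctured plane is projected radially to the unit sphere of the gauge.
  have hconn : IsPreconnected ({0}ᶜ : Set (Fin 2 → ℝ)) :=
    (isConnected_compl_singleton_of_one_lt_rank (by simp) 0).isPreconnected
  have hf : ContinuousOn (fun x => gauge D ((gauge D x)⁻¹ • x - v)) ({0}ᶜ : Set (Fin 2 → ℝ)) := by
    refine hcont.comp_continuousOn (ContinuousOn.sub (ContinuousOn.smul
      (hcont.continuousOn.inv₀ fun x hx => (hpos x hx).ne') continuousOn_id) continuousOn_const)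
  have hg := hpos v hv
  have hnegv : gauge D (-v) = gauge D v := gauge_neg hneg v
  have hone : 1 ≤ (gauge D v)⁻¹ := (one_le_inv₀ hg).2 hv1
  obtain ⟨x, hx, hx1⟩ := hconn.intermediate_value (a := v) (b := -v) (by simpa using hv)
    (by simpa using hv) hf (show (1 : ℝ) ∈ Set.Icc _ _ from ⟨by
      rw [show (gauge D v)⁻¹ • v - v = ((gauge D v)⁻¹ - 1) • v by module,
        gauge_smul_of_nonneg (by linarith), smul_eq_mul, sub_mul, inv_mul_cancel₀ hg.ne']
      linarith, by
      rw [hnegv, show (gauge D v)⁻¹ • (-v) - v = ((gauge D v)⁻¹ + 1) • (-v) by module,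
        gauge_smul_of_nonneg (by linarith), smul_eq_mul, hnegv, add_mul, inv_mul_cancel₀ hg.ne']
      linarith⟩)
  refine ⟨(gauge D x)⁻¹ • x, ?_, hx1⟩
  have := hpos x hx
  rw [gauge_smul_of_nonneg (by positivity), smul_eq_mul, inv_mul_cancel₀ this.ne']

/-! ### Assembling four touching copies -/

/-- A symmetric relation holds for all pairs of distinct indices in `Fin 4` once it holds for the
six increasing pairs. -/
lemma forall_ne_fin_four {R : Fin 4 → Fin 4 → Prop} (hs : ∀ i j, R i j → R j i)
    (h01 : R 0 1) (h02 : R 0 2) (h03 : R 0 3) (h12 : R 1 2) (h13 : R 1 3) (h23 : R 2 3) :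
    ∀ i j, i ≠ j → R i j := by
  intro i j hij
  fin_cases i <;> fin_cases j <;> first | exact absurd rfl hij | assumption | (apply hs; assumption)

/-- Three pairwise touching translates of `K` without a common point extend to four pairwise
touching homothets. -/
lemma four_of_three {K : Set (Fin 2 → ℝ)} (hKc : IsCompact K) (hK : Convex ℝ K)
    (hKn : K.Nontrivial) {v u : Fin 2 → ℝ}
    (touch : ∀ s s' : Fin 2 → ℝ, (s = 0 ∧ s' = v ∨ s = 0 ∧ s' = u ∨ s = v ∧ s' = u) →
      ((s +ᵥ (1 : ℝ) • K) ∩ (s' +ᵥ (1 : ℝ) • K)).Nonempty ∧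
        interior (s +ᵥ (1 : ℝ) • K) ∩ interior (s' +ᵥ (1 : ℝ) • K) = ∅)
    (hcommon : ∀ x ∈ K, x - v ∈ K → x - u ∉ K) :
    ∃ (lam : Fin 4 → ℝ) (t : Fin 4 → (Fin 2 → ℝ)),
      (∀ i, 0 < lam i) ∧
      ∀ i j : Fin 4, i ≠ j →
        ((t i +ᵥ lam i • K) ∩ (t j +ᵥ lam j • K)).Nonempty ∧
        interior (t i +ᵥ lam i • K) ∩ interior (t j +ᵥ lam j • K) = ∅ := by
  have hcomp : ∀ s : Fin 2 → ℝ, IsCompact (s +ᵥ (1 : ℝ) • K) := fun s => (hKc.smul _).vadd s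
  have hconv : ∀ s : Fin 2 → ℝ, Convex ℝ (s +ᵥ (1 : ℝ) • K) := fun s => (hK.smul _).vadd s
  have t1 := touch 0 v (by simp)
  have t2 := touch 0 u (by simp)
  have t3 := touch v u (by simp)
  obtain ⟨m, t, hm, h⟩ := exists_homothet_touching hKn hKc (hcomp 0) (hcomp v) (hcomp u)
    (hconv 0) (hconv v) (hconv u) t1.1 t2.1 t3.1 (by
      intro x hx hx' hx''
      rw [mem_translate_iff] at hx hx' hx''
      exact hcommon x (by simpa using hx) hx' hx'')
  refine ⟨![m, 1, 1, 1], ![t, 0, v, u], ?_, forall_ne_fin_four ?_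
    (h _ (by simp)) (h _ (by simp)) (h _ (by simp)) t1 t2 t3⟩
  · intro i; fin_cases i <;> simp [hm]
  · rintro i j ⟨h1, h2⟩
    exact ⟨by rwa [Set.inter_comm], by rwa [Set.inter_comm]⟩

/-- Every planar convex body has four pairwise touching positive homothetic
copies. -/
theorem stmt9 (K : Set (Fin 2 → ℝ))
    (hKcomp : IsCompact K) (hKconv : Convex ℝ K)
    (hKint : (interior K).Nonempty) :
    ∃ (lam : Fin 4 → ℝ) (t : Fin 4 → (Fin 2 → ℝ)),
      (∀ i, 0 < lam i) ∧
      ∀ i j : Fin 4, i ≠ j →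
        ((t i +ᵥ lam i • K) ∩ (t j +ᵥ lam j • K)).Nonempty ∧
        interior (t i +ᵥ lam i • K) ∩ interior (t j +ᵥ lam j • K) = ∅ := by
  obtain ⟨p, hp⟩ := hKint
  have hKn : K.Nontrivial :=
    (infinite_of_mem_nhds p (mem_interior_iff_mem_nhds.1 hp)).nontrivial
  have hD0 : K - K ∈ nhds (0 : Fin 2 → ℝ) := by
    refine mem_interior_iff_mem_nhds.1 (subset_interior_sub_left ?_)
    exact ⟨p, hp, p, interior_subset hp, sub_self p⟩
  have hDc : Convex ℝ (K - K) := hKconv.sub hKconv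
  have hneg : ∀ x ∈ K - K, -x ∈ K - K := by
    rintro _ ⟨x, hx, y, hy, rfl⟩
    exact ⟨y, hy, x, hx, (neg_sub x y).symm⟩
  have hgneg : ∀ x, gauge (K - K) (-x) = gauge (K - K) x := gauge_neg hneg
  obtain ⟨v, hvD, hv0, huniq⟩ := exists_single_contact hKcomp hKn
  have hv1 : gauge (K - K) v ≤ 1 := gauge_le_one_of_mem hvD
  obtain ⟨u, hu1, huv⟩ := exists_gauge_eq_one hDc hD0 ((NormedSpace.isVonNBounded_iff ℝ).2
    (isCompact_sub_self hKcomp).isBounded) hneg hv0 hv1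
  have hvu : gauge (K - K) (v - u) = 1 := by rw [← neg_sub u v, hgneg, huv]
  have touch : ∀ s s' : Fin 2 → ℝ, gauge (K - K) (s' - s) = 1 →
      ((s +ᵥ (1 : ℝ) • K) ∩ (s' +ᵥ (1 : ℝ) • K)).Nonempty ∧
        interior (s +ᵥ (1 : ℝ) • K) ∩ interior (s' +ᵥ (1 : ℝ) • K) = ∅ := fun s s' h =>
    ⟨translates_inter_nonempty hKcomp hKconv hD0 h.le, interior_translates_disjoint hKconv hD0 h.ge⟩
  -- A nonempty open set in the plane is not contained in a single point.
  have hv_touch : (((0 : Fin 2 → ℝ) +ᵥ (1 : ℝ) • K) ∩ (v +ᵥ (1 : ℝ) • K)).Nonempty ∧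
      interior ((0 : Fin 2 → ℝ) +ᵥ (1 : ℝ) • K) ∩ interior (v +ᵥ (1 : ℝ) • K) = ∅ := by
    refine ⟨translates_inter_nonempty hKcomp hKconv hD0 (by simpa using hv1), ?_⟩
    rw [← interior_inter]
    by_contra hne
    obtain ⟨x, hx⟩ := Set.nonempty_iff_ne_empty.2 hne
    obtain ⟨y, hy, z, hz, hyz⟩ :=
      (infinite_of_mem_nhds x (mem_interior_iff_mem_nhds.1 hx)).nontrivial
    rw [Set.mem_inter_iff, mem_translate_iff, mem_translate_iff, sub_zero] at hy hz
    exact hyz (huniq y hy.1 z hz.1 hy.2 hz.2)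
  by_cases h1 : ∃ x ∈ K, x - v ∈ K ∧ x - u ∈ K
  swap
  · push Not at h1
    refine four_of_three hKcomp hKconv hKn ?_ h1
    rintro s s' (⟨rfl, rfl⟩ | ⟨rfl, rfl⟩ | ⟨rfl, rfl⟩)
    exacts [hv_touch, touch _ _ (by simpa using hu1), touch _ _ huv]
  by_cases h2 : ∃ x ∈ K, x - v ∈ K ∧ x - (v - u) ∈ K
  swap
  · push Not at h2
    refine four_of_three hKcomp hKconv hKn ?_ h2
    rintro s s' (⟨rfl, rfl⟩ | ⟨rfl, rfl⟩ | ⟨rfl, rfl⟩)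
    exacts [hv_touch, touch _ _ (by simpa using hvu),
      touch _ _ (by rw [sub_sub_cancel_left, hgneg, hu1])]
  obtain ⟨x, hx, hxv, hxu⟩ := h1
  obtain ⟨y, hy, hyv, hyu⟩ := h2
  obtain rfl := huniq x hx y hy hxv hyv
  refine ⟨fun _ => 1, ![0, v, u, v - u], fun _ => one_pos, forall_ne_fin_four ?_
    hv_touch (touch _ _ (by simpa using hu1)) (touch _ _ (by simpa using hvu))
    (touch _ _ huv) (touch _ _ (by simp [hgneg, hu1])) ⟨?_, ?_⟩⟩
  · rintro i j ⟨h1, h2⟩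
    exact ⟨by rwa [Set.inter_comm], by rwa [Set.inter_comm]⟩
  · exact ⟨x, mem_translate_iff.2 hxu, mem_translate_iff.2 hyu⟩
  · refine interior_translates_disjoint hKconv hD0 (s := u) (s' := v - u) ?_
    have h3 := gauge_add_le hDc (absorbent_nhds_zero hD0) v (-(v - u - u))
    rw [hgneg, show v + -(v - u - u) = (2 : ℝ) • u by module,
      gauge_smul_of_nonneg (by norm_num), smul_eq_mul, hu1] at h3
    linarith
end

section
/- Let K_1, …, K_n be convex bodies in ℝ² (compact convex sets with nonempty interior) that pairwise touch (for all i ≠ j, K_i ∩ K_j ≠ ∅ and interior(K_i) ∩ interior(K_j) = ∅), and suppose no point of the plane belongs to three of the bodies (K_i ∩ K_j ∩ K_k = ∅ for pairwise distinct i, j, k). Then n ≤ 4. -/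
/-!
Choose `p i` in the interior of `K i` and `q i j ∈ K i ∩ K j`, and join `p i` to `p j` by the bent
edge `p i, q i j, p j`. A half-edge `[p i, q i j]` lies in `K i` and meets the boundary of `K i` at
most at `q i j`, which by the triple condition lies in no third body; so two edges without a common
vertex are disjoint (`disjoint_half_edges`). For `n ≥ 5` this would be a drawing of the complete
graph `K₅` in which independent edges are disjoint.

Such a drawing does not exist (`no_drawing`). Let `A i j k` be the angle swept by the edge `ij`
seen from the vertex `k`. If the edges `ij` and `kl` are disjoint, then `x - y ≠ 0` for `x` on `ij`
and `y` on `kl`, so the angle swept by `x - y` around the boundary of the parameter square vanishes: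
`A i j k - A i j l + A k l j - A k l i = 0` (`sweep_square` for segments, where it follows from
separating the segments by a line; `sweep₂_square` for bent edges). On the other hand
`A i j k = θ j k - θ i k + 2π N i j k` with `N i j k` an integer and `θ a b` an argument of
`p a - p b`, normalised by `θ b a = θ a b + π` for `a < b`. Add the resulting integer relations over
the 15 pairs of independent edges: each `N i j k` occurs twice, while the half-turns contribute
an odd number for each of the 5 interleaved pairs `{ij, kl}`, `i < k < j < l`, and nothing for the
others. The total is odd, yet it is zero.
-/

open Complex

/-- The angle swept by the segment from `a` to `b` as seen from `c`. It is the expected angle in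
`(-π, π)` when `c` does not lie on the segment. -/
noncomputable def sweep (a b c : ℂ) : ℝ := arg ((b - c) / (a - c))

/-- The angle swept by the two-segment path `a, m, b` as seen from `c`. -/
noncomputable def sweep₂ (a m b c : ℂ) : ℝ := sweep a m c + sweep m b c

/-- The differences `x - y` of points of two disjoint segments lie in an open half-plane. -/
lemma exists_halfplane {a b c d : ℂ} (h : Disjoint (segment ℝ a b) (segment ℝ c d)) :
    ∃ w : ℂ, ∀ x ∈ segment ℝ a b, ∀ y ∈ segment ℝ c d, 0 < (w * (x - y)).re := by
  have hc : IsCompact (segment ℝ c d) := by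
    rw [← convexHull_pair]; exact (Set.toFinite _).isCompact_convexHull ℝ
  have ha : IsCompact (segment ℝ a b) := by
    rw [← convexHull_pair]; exact (Set.toFinite _).isCompact_convexHull ℝ
  obtain ⟨f, u, v, hs, huv, ht⟩ := geometric_hahn_banach_compact_closed
    (convex_segment c d) hc (convex_segment a b) ha.isClosed h.symm
  -- The real functional `f` is `z ↦ re (w * z)` for this `w`.
  refine ⟨⟨f 1, -f I⟩, fun x hx y hy => ?_⟩
  have hf : ∀ z : ℂ, f z = z.re * f 1 + z.im * f I := by
    intro z
    have hz : z = z.re • (1 : ℂ) + z.im • I := by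
      apply Complex.ext <;> simp
    conv_lhs => rw [hz]
    rw [map_add, map_smul, map_smul, smul_eq_mul, smul_eq_mul]
  have h1 := hs y hy
  have h2 := ht x hx
  have h3 : 0 < f (x - y) := by rw [map_sub]; linarith
  rw [hf] at h3
  simp only [mul_re]
  linarith

/-- In an open half-plane, the principal argument of a quotient is the difference of the arguments
measured from the axis of the half-plane. -/
lemma arg_div_of_halfplane {w u v : ℂ} (hu : 0 < (w * u).re) (hv : 0 < (w * v).re) :
    arg (u / v) = arg (w * u) - arg (w * v) := by
  have hw : w ≠ 0 := by rintro rfl; simp at hu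
  have hu0 : w * u ≠ 0 := by intro h; simp [h] at hu
  have hv0 : w * v ≠ 0 := by intro h; simp [h] at hv
  have e : u / v = (w * u) / (w * v) := by rw [mul_div_mul_left _ _ hw]
  have bu := abs_lt.1 (abs_arg_lt_pi_div_two_iff.2 (Or.inl hu))
  have bv := abs_lt.1 (abs_arg_lt_pi_div_two_iff.2 (Or.inl hv))
  have h := arg_div_coe_angle hu0 hv0
  rw [← e, ← Real.Angle.coe_sub] at h
  have h2 := congrArg Real.Angle.toReal h
  rwa [Real.Angle.toReal_coe_eq_self_iff.2 ⟨neg_pi_lt_arg _, arg_le_pi _⟩,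
    Real.Angle.toReal_coe_eq_self_iff.2 ⟨by linarith [bu.1, bv.2], by linarith [bu.2, bv.1]⟩] at h2

/-- For disjoint segments `[a, b]` and `[c, d]`, the angle swept by `x - y` around the boundary of
`[a, b] × [c, d]` is zero. -/
lemma sweep_square {a b c d : ℂ} (h : Disjoint (segment ℝ a b) (segment ℝ c d)) :
    sweep a b c - sweep a b d + sweep c d b - sweep c d a = 0 := by
  obtain ⟨w, hw⟩ := exists_halfplane h
  have ha := left_mem_segment ℝ a b
  have hb := right_mem_segment ℝ a b
  have hc := left_mem_segment ℝ c d
  have hd := right_mem_segment ℝ c d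
  have e1 := arg_div_of_halfplane (hw b hb c hc) (hw a ha c hc)
  have e2 := arg_div_of_halfplane (hw b hb d hd) (hw a ha d hd)
  have e3 := arg_div_of_halfplane (hw b hb d hd) (hw b hb c hc)
  have e4 := arg_div_of_halfplane (hw a ha d hd) (hw a ha c hc)
  rw [← neg_div_neg_eq, neg_sub, neg_sub] at e3 e4
  unfold sweep
  rw [e1, e2, e3, e4]
  ring

lemma sweep₂_square {a m b c m' d : ℂ}
    (h1 : Disjoint (segment ℝ a m) (segment ℝ c m'))
    (h2 : Disjoint (segment ℝ a m) (segment ℝ m' d))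
    (h3 : Disjoint (segment ℝ m b) (segment ℝ c m'))
    (h4 : Disjoint (segment ℝ m b) (segment ℝ m' d)) :
    sweep₂ a m b c - sweep₂ a m b d + sweep₂ c m' d b - sweep₂ c m' d a = 0 := by
  have := sweep_square h1
  have := sweep_square h2
  have := sweep_square h3
  have := sweep_square h4
  unfold sweep₂
  linarith

lemma coe_sweep₂ {a m b c : ℂ} (ha : a ≠ c) (hm : m ≠ c) (hb : b ≠ c) :
    (sweep₂ a m b c : Real.Angle) = (arg (b - c) : Real.Angle) - (arg (a - c) : Real.Angle) := by
  unfold sweep₂ sweep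
  rw [Real.Angle.coe_add, arg_div_coe_angle (sub_ne_zero.2 hm) (sub_ne_zero.2 ha),
    arg_div_coe_angle (sub_ne_zero.2 hb) (sub_ne_zero.2 hm)]
  abel

/-- The parity obstruction: the integer relations coming from the 15 pairs of independent edges of
`K₅` are inconsistent modulo 2. -/
lemma parity_obstruction (N : Fin 5 → Fin 5 → Fin 5 → ℤ)
    (h : ∀ i j k l : Fin 5, i < j → k < l → i ≠ k → i ≠ l → j ≠ k → j ≠ l →
      ((if k < j then 1 else 0) - (if k < i then 1 else 0) - (if l < j then 1 else 0)
        + (if l < i then 1 else 0) : ℤ) + (N i j k - N i j l + N k l j - N k l i) = 0) : False := by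
  have h1 := h 0 1 2 3 (by decide) (by decide) (by decide) (by decide) (by decide) (by decide)
  have h2 := h 0 1 2 4 (by decide) (by decide) (by decide) (by decide) (by decide) (by decide)
  have h3 := h 0 1 3 4 (by decide) (by decide) (by decide) (by decide) (by decide) (by decide)
  have h4 := h 0 2 1 3 (by decide) (by decide) (by decide) (by decide) (by decide) (by decide)
  have h5 := h 0 2 1 4 (by decide) (by decide) (by decide) (by decide) (by decide) (by decide)
  have h6 := h 0 2 3 4 (by decide) (by decide) (by decide) (by decide) (by decide) (by decide)
  have h7 := h 0 3 1 2 (by decide) (by decide) (by decide) (by decide) (by decide) (by decide)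
  have h8 := h 0 3 1 4 (by decide) (by decide) (by decide) (by decide) (by decide) (by decide)
  have h9 := h 0 3 2 4 (by decide) (by decide) (by decide) (by decide) (by decide) (by decide)
  have h10 := h 0 4 1 2 (by decide) (by decide) (by decide) (by decide) (by decide) (by decide)
  have h11 := h 0 4 1 3 (by decide) (by decide) (by decide) (by decide) (by decide) (by decide)
  have h12 := h 0 4 2 3 (by decide) (by decide) (by decide) (by decide) (by decide) (by decide)
  have h13 := h 1 2 3 4 (by decide) (by decide) (by decide) (by decide) (by decide) (by decide)
  have h14 := h 1 3 2 4 (by decide) (by decide) (by decide) (by decide) (by decide) (by decide)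
  have h15 := h 1 4 2 3 (by decide) (by decide) (by decide) (by decide) (by decide) (by decide)
  simp only [Fin.reduceLT, if_true, if_false] at *
  omega

/-- There is no drawing of `K₅` in the plane with two-segment edges in which edges without a common
vertex are disjoint. Only the bends `q i j` with `i < j` are used. -/
lemma no_drawing (p : Fin 5 → ℂ) (q : Fin 5 → Fin 5 → ℂ) (hp : Function.Injective p)
    (hq : ∀ i j k, i < j → k ≠ i → k ≠ j → q i j ≠ p k)
    (hd : ∀ i j k l : Fin 5, i < j → k < l → i ≠ k → i ≠ l → j ≠ k → j ≠ l →
      Disjoint (segment ℝ (p i) (q i j)) (segment ℝ (p k) (q k l)) ∧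
      Disjoint (segment ℝ (p i) (q i j)) (segment ℝ (q k l) (p l)) ∧
      Disjoint (segment ℝ (q i j) (p j)) (segment ℝ (p k) (q k l)) ∧
      Disjoint (segment ℝ (q i j) (p j)) (segment ℝ (q k l) (p l))) : False := by
  let s : Fin 5 → Fin 5 → ℤ := fun a b => if b < a then 1 else 0
  let θ : Fin 5 → Fin 5 → ℝ := fun a b =>
    if b < a then arg (p b - p a) + Real.pi else arg (p a - p b)
  have hθ : ∀ a b, a ≠ b → (θ a b : Real.Angle) = arg (p a - p b) := by
    intro a b hab
    by_cases h : b < a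
    · simp only [θ, if_pos h]
      rw [Real.Angle.coe_add, ← arg_neg_coe_angle (sub_ne_zero.2 (hp.ne hab.symm)), neg_sub]
    · simp only [θ, if_neg h]
  have hθs : ∀ a b, a ≠ b → θ a b - θ b a = Real.pi * (2 * s a b - 1) := by
    intro a b hab
    rcases lt_or_gt_of_ne hab with h | h
    · simp only [θ, s, if_pos h, if_neg h.not_gt]; push_cast; ring
    · simp only [θ, s, if_pos h, if_neg h.not_gt]; push_cast; ring
  have hN : ∀ i j k : Fin 5, ∃ N : ℤ, i < j → k ≠ i → k ≠ j →
      sweep₂ (p i) (q i j) (p j) (p k) = θ j k - θ i k + 2 * Real.pi * N := by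
    intro i j k
    by_cases h : i < j ∧ k ≠ i ∧ k ≠ j
    · obtain ⟨hij, hki, hkj⟩ := h
      have e := coe_sweep₂ (hp.ne hki.symm) (hq i j k hij hki hkj) (hp.ne hkj.symm)
      rw [← hθ j k hkj.symm, ← hθ i k hki.symm, ← Real.Angle.coe_sub,
        Real.Angle.angle_eq_iff_two_pi_dvd_sub] at e
      obtain ⟨N, e⟩ := e
      exact ⟨N, fun _ _ _ => by linarith⟩
    · exact ⟨0, fun h1 h2 h3 => absurd ⟨h1, h2, h3⟩ h⟩
  choose N hN using hN
  refine parity_obstruction N fun i j k l hij hkl hik hil hjk hjl => ?_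
  obtain ⟨d1, d2, d3, d4⟩ := hd i j k l hij hkl hik hil hjk hjl
  have e := sweep₂_square d1 d2 d3 d4
  rw [hN i j k hij hik.symm hjk.symm, hN i j l hij hil.symm hjl.symm,
    hN k l j hkl hjk hjl, hN k l i hkl hik hil] at e
  have t1 := hθs j k hjk
  have t2 := hθs i k hik
  have t3 := hθs j l hjl
  have t4 := hθs i l hil
  have key : (2 * Real.pi) * (((s j k - s i k - s j l + s i l +
      (N i j k - N i j l + N k l j - N k l i) : ℤ)) : ℝ) = 0 := by
    push_cast
    linear_combination e - t1 + t2 + t3 - t4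
  have key2 := (mul_eq_zero.1 key).resolve_left Real.two_pi_pos.ne'
  exact Int.cast_eq_zero.1 key2

section ConvexBodies

variable {E : Type*} [AddCommGroup E] [Module ℝ E] [TopologicalSpace E] [IsTopologicalAddGroup E]
  [ContinuousSMul ℝ E]

lemma interior_inter_eq_empty {A B : Set E} (hB : Convex ℝ B) (hBint : (interior B).Nonempty)
    (h : interior A ∩ interior B = ∅) : interior A ∩ B = ∅ := by
  by_contra hne
  obtain ⟨x, hxA, hxB⟩ := Set.nonempty_iff_ne_empty.2 hne
  have hx : x ∈ closure (interior B) := by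
    rw [hB.closure_interior_eq_closure_of_nonempty_interior hBint]
    exact subset_closure hxB
  have := mem_closure_iff.1 hx _ isOpen_interior hxA
  simp [h] at this

/-- Half-edges in two non-overlapping bodies `A` and `B` are disjoint as soon as the end `q` of the
first one avoids `B`: up to `q` that half-edge runs in the interior of `A`. -/
lemma disjoint_half_edges {A B : Set E} {p q p' q' : E} (hA : Convex ℝ A) (hB : Convex ℝ B)
    (hAB : interior A ∩ B = ∅) (hp : p ∈ interior A) (hq : q ∈ A)
    (hp' : p' ∈ B) (hq' : q' ∈ B) (hqB : q ∉ B) :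
    Disjoint (segment ℝ p q) (segment ℝ p' q') := by
  rw [Set.disjoint_left]
  intro x hx hx'
  have hxB : x ∈ B := hB.segment_subset hp' hq' hx'
  have hxA : x ∉ interior A := fun h => by
    have : x ∈ interior A ∩ B := ⟨h, hxB⟩
    simp [hAB] at this
  rw [← insert_endpoints_openSegment] at hx
  rcases hx with rfl | rfl | hx
  · exact hxA hp
  · exact hqB hxB
  · exact hxA (hA.openSegment_interior_self_subset_interior hp hq hx)

end ConvexBodies

/-- If `K 1, …, K n` are pairwise touching planar convex bodies no three of
which share a common point, then `n ≤ 4`. -/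
theorem stmt11 {n : ℕ} (K : Fin n → Set (Fin 2 → ℝ))
    (hKcomp : ∀ i, IsCompact (K i)) (hKconv : ∀ i, Convex ℝ (K i))
    (hKint : ∀ i, (interior (K i)).Nonempty)
    (htouch : ∀ i j : Fin n, i ≠ j →
      (K i ∩ K j).Nonempty ∧ interior (K i) ∩ interior (K j) = ∅)
    (htriple : ∀ i j k : Fin n, i ≠ j → j ≠ k → i ≠ k →
      K i ∩ K j ∩ K k = ∅) :
    n ≤ 4 := by
  by_contra! hn
  let g : Fin 5 → Fin n := Fin.castLE hn
  have hg : Function.Injective g := Fin.castLE_injective hn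
  choose p hp using fun i => hKint (g i)
  have hQ : ∀ i j : Fin 5, ∃ x, i ≠ j → x ∈ K (g i) ∧ x ∈ K (g j) := fun i j => by
    by_cases h : i = j
    · exact ⟨0, fun h' => absurd h h'⟩
    · obtain ⟨x, hx⟩ := (htouch _ _ (hg.ne h)).1
      exact ⟨x, fun _ => hx⟩
  choose q hq using hQ
  have hpK : ∀ i, p i ∈ K (g i) := fun i => interior_subset (hp i)
  have hsep : ∀ i j, i ≠ j → interior (K (g i)) ∩ K (g j) = ∅ := fun i j h =>
    interior_inter_eq_empty (hKconv _) (hKint _) (htouch _ _ (hg.ne h)).2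
  have hpn : ∀ i j, i ≠ j → p i ∉ K (g j) := fun i j h hx => by
    have : p i ∈ interior (K (g i)) ∩ K (g j) := ⟨hp i, hx⟩
    simp [hsep i j h] at this
  have hqn : ∀ i j k, i ≠ j → k ≠ i → k ≠ j → q i j ∉ K (g k) := fun i j k hij hki hkj hx => by
    have : q i j ∈ K (g i) ∩ K (g j) ∩ K (g k) := ⟨hq i j hij, hx⟩
    rw [htriple _ _ _ (hg.ne hij) (hg.ne hkj.symm) (hg.ne hki.symm)] at this
    exact this
  let φ : (Fin 2 → ℝ) ≃ₗ[ℝ] ℂ := Complex.basisOneI.equivFun.symm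
  have hφ : ∀ a b c d, Disjoint (segment ℝ a b) (segment ℝ c d) →
      Disjoint (segment ℝ (φ a) (φ b)) (segment ℝ (φ c) (φ d)) := by
    intro a b c d h
    have e : ∀ x y, φ '' segment ℝ x y = segment ℝ (φ x) (φ y) := fun x y =>
      image_segment ℝ φ.toLinearMap.toAffineMap x y
    rw [← e, ← e]
    exact (Set.disjoint_image_iff φ.injective).2 h
  refine no_drawing (fun i => φ (p i)) (fun i j => φ (q i j)) ?_ ?_ ?_
  · intro i j h
    by_contra hij
    exact hpn i j hij (φ.injective h ▸ hpK j)
  · intro i j k hij hki hkj h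
    exact hpn k i hki (φ.injective h ▸ (hq i j hij.ne).1)
  · intro i j k l hij hkl hik hil hjk hjl
    obtain ⟨qi, qj⟩ := hq i j hij.ne
    obtain ⟨qk, ql⟩ := hq k l hkl.ne
    have hk := hqn i j k hij.ne hik.symm hjk.symm
    have hl := hqn i j l hij.ne hil.symm hjl.symm
    refine ⟨hφ _ _ _ _ ?_, hφ _ _ _ _ ?_, hφ _ _ _ _ ?_, hφ _ _ _ _ ?_⟩
    · exact disjoint_half_edges (hKconv _) (hKconv _) (hsep i k hik) (hp i) qi (hpK k) qk hk
    · exact disjoint_half_edges (hKconv _) (hKconv _) (hsep i l hil) (hp i) qi ql (hpK l) hl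
    · rw [segment_symm ℝ (q i j)]
      exact disjoint_half_edges (hKconv _) (hKconv _) (hsep j k hjk) (hp j) qj (hpK k) qk hk
    · rw [segment_symm ℝ (q i j)]
      exact disjoint_half_edges (hKconv _) (hKconv _) (hsep j l hjl) (hp j) qj ql (hpK l) hl
end

section
/- Let K_1, K_2, K_3, K_4 be convex bodies in ℝ² (compact convex sets with nonempty interior) that pairwise touch (for all i ≠ j, K_i ∩ K_j ≠ ∅ and interior(K_i) ∩ interior(K_j) = ∅), and suppose no point of the plane belongs to three of them. Then there is an index i such that K_i is contained in the closure of a bounded connected component of the complement ℝ² \ ⋃_{j ≠ i} K_j. -/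
/-!
Pick a contact point `c i j ∈ K i ∩ K j` for every pair, and let `v = c i j` be one of maximal
Euclidean norm; the other contact points then lie strictly on one side of a line through `v`.
Let `k`, `l` be the remaining indices and consider the four directions from `v` to
`q = c i k`, `r = c i l` (in `K i`) and `s = c j k`, `t = c j l` (in `K j`). A line separating
`K i` from `K j` passes through `v`, and parallel directions from different bodies would produce a
triple point, so in the angular order around `v` both of `q, r` come strictly before both
of `s, t` (up to orientation). If `q` comes first, `r` points into the angle between `q` and `s`,
and separation of `K i` from `K k` forces `r` into the triangle `v q s`, whence the interior of
`K l` meets the interior of this triangle (`exists_mem_interior_triangle`; when `v, q, r` are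
collinear, the position of `t` tells on which side of the line `K l` lies).
If `r` comes first, `K k` and the triangle `v r t` take these roles.

The sides of the triangle `v q s` lie in `K i`, `K k` and `K j`, so a connected set which avoids
these three bodies and meets the interior of the triangle stays inside it
(`isBounded_component`). This bounds the component containing `interior (K l)`, whose closure
contains `K l`.
-/

/-! ### Plane vectors, triangles and bodies -/

/-- The determinant of two plane vectors. -/
def cross (x y : Fin 2 → ℝ) : ℝ := x 0 * y 1 - x 1 * y 0

/-- `p` lies in the interior of the positively oriented triangle `v q s`: up to the factor
`cross (q - v) (s - v)`, its barycentric coordinates are positive. -/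
def InTriangle (v q s p : Fin 2 → ℝ) : Prop :=
  0 < cross (p - v) (s - v) ∧ 0 < cross (q - v) (p - v) ∧
    cross (p - v) (s - v) + cross (q - v) (p - v) < cross (q - v) (s - v)

/-- A convex body of the plane. -/
structure IsBody (A : Set (Fin 2 → ℝ)) : Prop where
  compact : IsCompact A
  convex : Convex ℝ A
  int : (interior A).Nonempty

lemma cross_cont {f g : (Fin 2 → ℝ) → (Fin 2 → ℝ)} (hf : Continuous f) (hg : Continuous g) :
    Continuous fun x => cross (f x) (g x) := by
  unfold cross
  fun_prop

lemma isOpen_inTriangle (v q s : Fin 2 → ℝ) : IsOpen {p | InTriangle v q s p} := by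
  have h1 : Continuous fun p : Fin 2 → ℝ => cross (p - v) (s - v) :=
    cross_cont (by fun_prop) (by fun_prop)
  have h2 : Continuous fun p : Fin 2 → ℝ => cross (q - v) (p - v) :=
    cross_cont (by fun_prop) (by fun_prop)
  exact (isOpen_lt continuous_const h1).inter
    ((isOpen_lt continuous_const h2).inter (isOpen_lt (h1.add h2) continuous_const))

lemma IsBody.subset_closure {A : Set (Fin 2 → ℝ)} (hA : IsBody A) : A ⊆ closure (interior A) := by
  rw [hA.convex.closure_interior_eq_closure_of_nonempty_interior hA.int]
  exact _root_.subset_closure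

lemma IsBody.disjoint_interior {A B : Set (Fin 2 → ℝ)} (hB : IsBody B)
    (h : interior A ∩ interior B = ∅) : interior A ∩ B = ∅ := by
  rw [← Set.disjoint_iff_inter_eq_empty] at *
  exact (h.closure_right isOpen_interior).mono_right hB.subset_closure

/-- Touching bodies are separated by a line `m x + n y = const` through any common point `r`;
the second conjunct is strict on the interior of `B`, so that the line is nondegenerate. -/
lemma exists_sep {A B : Set (Fin 2 → ℝ)} (hA : IsBody A) (hB : IsBody B)
    (h : interior A ∩ interior B = ∅) {r : Fin 2 → ℝ} (hrA : r ∈ A) (hrB : r ∈ B) :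
    ∃ m n : ℝ, (∀ a ∈ A, m * (a - r) 0 + n * (a - r) 1 ≤ 0) ∧
      (∀ b ∈ B, 0 ≤ m * (b - r) 0 + n * (b - r) 1) ∧
      (∀ b ∈ interior B, 0 < m * (b - r) 0 + n * (b - r) 1) := by
  obtain ⟨f, u, hfA, hfB⟩ := geometric_hahn_banach_open_open hA.convex.interior isOpen_interior
    hB.convex.interior isOpen_interior (Set.disjoint_iff_inter_eq_empty.2 h)
  have hA' : ∀ a ∈ A, f a ≤ u := fun a ha =>
    closure_minimal (fun x hx => (hfA x hx).le) (isClosed_le f.continuous continuous_const)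
      (hA.subset_closure ha)
  have hB' : ∀ b ∈ B, u ≤ f b := fun a ha =>
    closure_minimal (fun x hx => (hfB x hx).le) (isClosed_le continuous_const f.continuous)
      (hB.subset_closure ha)
  have hr : f r = u := le_antisymm (hA' r hrA) (hB' r hrB)
  have key : ∀ x, f (Pi.single 0 1) * (x - r) 0 + f (Pi.single 1 1) * (x - r) 1 = f x - u := by
    intro x
    have hx : x - r = (x - r) 0 • Pi.single 0 1 + (x - r) 1 • Pi.single 1 1 := by
      ext i
      fin_cases i <;> simp
    rw [← hr, ← map_sub]
    conv_rhs => rw [hx]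
    simp only [map_add, map_smul, smul_eq_mul]
    ring
  refine ⟨f (Pi.single 0 1), f (Pi.single 1 1), fun a ha => ?_, fun b hb => ?_, fun b hb => ?_⟩
  · rw [key]; linarith [hA' a ha]
  · rw [key]; linarith [hB' b hb]
  · rw [key]; linarith [hfB b hb]

/-! ### Triangles as barriers -/

/-- The sides of a triangle are barriers for connected sets: the component of an inner point
in the complement of a set containing the three sides is bounded. -/
lemma isBounded_component {U : Set (Fin 2 → ℝ)} {v q s p : Fin 2 → ℝ}
    (h1 : segment ℝ v q ⊆ Uᶜ) (h2 : segment ℝ v s ⊆ Uᶜ) (h3 : segment ℝ q s ⊆ Uᶜ)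
    (hp : InTriangle v q s p) (hpU : p ∈ U) :
    Bornology.IsBounded (connectedComponentIn U p) := by
  set δ := cross (q - v) (s - v) with hδ
  have hδ0 : 0 < δ := by obtain ⟨_, _, _⟩ := hp; linarith
  have cramer : ∀ x, x = (1 - cross (x - v) (s - v) / δ - cross (q - v) (x - v) / δ) • v +
      (cross (x - v) (s - v) / δ) • q + (cross (q - v) (x - v) / δ) • s := by
    intro x
    have e : ∀ i, δ * (x i - v i) = cross (x - v) (s - v) * (q i - v i) +
        cross (q - v) (x - v) * (s i - v i) := by
      intro i
      fin_cases i <;> simp [hδ, cross] <;> ring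
    ext i
    have := e i
    simp only [Pi.add_apply, Pi.smul_apply, smul_eq_mul]
    field_simp
    linarith
  have c1 : Continuous fun p : Fin 2 → ℝ => cross (p - v) (s - v) :=
    cross_cont (by fun_prop) (by fun_prop)
  have c2 : Continuous fun p : Fin 2 → ℝ => cross (q - v) (p - v) :=
    cross_cont (by fun_prop) (by fun_prop)
  let V : Set (Fin 2 → ℝ) := {x | cross (x - v) (s - v) < 0} ∪ ({x | cross (q - v) (x - v) < 0} ∪
    {x | δ < cross (x - v) (s - v) + cross (q - v) (x - v)})
  have hV : IsOpen V := (isOpen_lt c1 continuous_const).union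
    ((isOpen_lt c2 continuous_const).union (isOpen_lt continuous_const (c1.add c2)))
  have hdisj : Disjoint {x | InTriangle v q s x} V := by
    rw [Set.disjoint_left]
    rintro x ⟨a1, a2, a3⟩ (b | b | b) <;> simp only [Set.mem_ofPred_eq] at b <;> linarith
  have hcover : connectedComponentIn U p ⊆ {x | InTriangle v q s x} ∪ V := by
    intro x hx
    have hxU : x ∈ U := connectedComponentIn_subset U p hx
    by_contra hcon
    have hcon1 : ¬ InTriangle v q s x := fun h => hcon (Or.inl h)
    have hcon2 : x ∉ V := fun h => hcon (Or.inr h)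
    simp only [V, Set.mem_union, Set.mem_ofPred_eq, not_or, not_lt] at hcon2
    obtain ⟨a1, a2, a3⟩ := hcon2
    have b1 : 0 ≤ cross (x - v) (s - v) / δ := by positivity
    have b2 : 0 ≤ cross (q - v) (x - v) / δ := by positivity
    have b3 : cross (x - v) (s - v) / δ + cross (q - v) (x - v) / δ ≤ 1 := by
      rw [← add_div, div_le_one hδ0]; exact a3
    have hx' := cramer x
    rcases a1.eq_or_lt with e | l1
    · refine h2 ⟨1 - cross (q - v) (x - v) / δ, cross (q - v) (x - v) / δ, ?_, b2, by ring, ?_⟩ hxU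
      · rw [← e] at b3; simp at b3; linarith
      · rw [← e] at hx'; simpa using hx'.symm
    rcases a2.eq_or_lt with e | l2
    · refine h1 ⟨1 - cross (x - v) (s - v) / δ, cross (x - v) (s - v) / δ, ?_, b1, by ring, ?_⟩ hxU
      · rw [← e] at b3; simp at b3; linarith
      · rw [← e] at hx'; simpa using hx'.symm
    rcases a3.eq_or_lt with e | l3
    · have e' : cross (x - v) (s - v) / δ + cross (q - v) (x - v) / δ = 1 := by
        rw [← add_div, e, div_self hδ0.ne']
      refine h3 ⟨_, _, b1, b2, e', ?_⟩ hxU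
      have e0 : 1 - cross (x - v) (s - v) / δ - cross (q - v) (x - v) / δ = 0 := by linarith
      rw [e0] at hx'; simpa using hx'.symm
    · exact hcon1 ⟨l1, l2, l3⟩
  have hsub : connectedComponentIn U p ⊆ {x | InTriangle v q s x} :=
    isPreconnected_connectedComponentIn.subset_left_of_subset_union (isOpen_inTriangle v q s) hV
      hdisj hcover ⟨p, mem_connectedComponentIn hpU, hp⟩
  have hcomp : IsCompact (Set.Icc (0 : ℝ) 1 ×ˢ Set.Icc (0 : ℝ) 1) := isCompact_Icc.prod isCompact_Icc
  have hF : Continuous fun w : ℝ × ℝ => (1 - w.1 - w.2) • v + w.1 • q + w.2 • s := by fun_prop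
  refine (hcomp.image hF).isBounded.subset fun x hx => ?_
  obtain ⟨a1, a2, a3⟩ := hsub hx
  have b1 : 0 ≤ cross (x - v) (s - v) / δ := by positivity
  have b2 : 0 ≤ cross (q - v) (x - v) / δ := by positivity
  have b3 : cross (x - v) (s - v) / δ + cross (q - v) (x - v) / δ ≤ 1 := by
    rw [← add_div, div_le_one hδ0]; exact a3.le
  exact ⟨(cross (x - v) (s - v) / δ, cross (q - v) (x - v) / δ),
    ⟨⟨b1, by dsimp only; linarith⟩, ⟨b2, by dsimp only; linarith⟩⟩, (cramer x).symm⟩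

/-! ### The order of contact points around `v` -/

/-- Suppose that, seen from `v`, the directions appear in the order `q, r, s` with `r` possibly
parallel to but then not farther than `q`, and that `t` comes after `q`. Then the body `D`
containing `r` and `t` has an inner point inside the triangle `v q s`. -/
lemma exists_mem_interior_triangle {A C D : Set (Fin 2 → ℝ)}
    (hA : IsBody A) (hC : IsBody C) (hD : IsBody D)
    (hAC : interior A ∩ interior C = ∅) (hAD : interior A ∩ interior D = ∅)
    (hACD : A ∩ C ∩ D = ∅) {v q r s t : Fin 2 → ℝ}
    (hvA : v ∈ A) (hqA : q ∈ A) (hqC : q ∈ C) (hrA : r ∈ A) (hrD : r ∈ D) (hsC : s ∈ C)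
    (htD : t ∈ D) (hqs : 0 < cross (q - v) (s - v)) (hrs : 0 < cross (r - v) (s - v))
    (hqt : 0 < cross (q - v) (t - v))
    (hqr : 0 < cross (q - v) (r - v) ∨
      cross (q - v) (r - v) = 0 ∧ cross (r - v) (s - v) ≤ cross (q - v) (s - v)) :
    ∃ p ∈ interior D, InTriangle v q s p := by
  have hnot : ∀ x, x ∈ A → x ∈ C → x ∈ D → False := fun x a b c => by
    have : x ∈ A ∩ C ∩ D := ⟨⟨a, b⟩, c⟩
    rw [hACD] at this
    exact this
  have e : ∀ i, cross (q - v) (s - v) * (r i - v i) = cross (r - v) (s - v) * (q i - v i) +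
      cross (q - v) (r - v) * (s i - v i) := by
    intro i
    fin_cases i <;> simp [cross] <;> ring
  set δ := cross (q - v) (s - v) with hδ
  set a := cross (r - v) (s - v) with ha
  set b := cross (q - v) (r - v) with hb
  have e0 := e 0
  have e1 := e 1
  rcases hqr with hqr | ⟨hqr, hle⟩
  · have hlt : a + b < δ := by
      -- Otherwise the segment from `v` to `r` crosses the segment from `q` to `s`.
      by_contra hge
      push Not at hge
      obtain ⟨m, n, fA, fC, fC'⟩ := exists_sep hA hC hAC hqA hqC
      have f1 := fA v hvA
      have f2 := fA r hrA
      have f3 := fC s hsC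
      simp only [Pi.sub_apply] at f1 f2 f3
      obtain ⟨x, hx⟩ : ∃ x, x = m * (q 0 - v 0) + n * (q 1 - v 1) := ⟨_, rfl⟩
      obtain ⟨y, hy⟩ : ∃ y, y = m * (s 0 - v 0) + n * (s 1 - v 1) := ⟨_, rfl⟩
      obtain ⟨z, hz⟩ : ∃ z, z = m * (r 0 - v 0) + n * (r 1 - v 1) := ⟨_, rfl⟩
      have hx0 : 0 ≤ x := by linarith
      have hyx : x ≤ y := by linarith
      have hzx : z ≤ x := by linarith
      have hzz : δ * z = a * x + b * y := by
        rw [hx, hy, hz]; linear_combination m * e0 + n * e1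
      rcases hge.eq_or_lt with h | h
      · refine hnot r hrA (hC.convex.segment_subset hqC hsC
          ⟨a / δ, b / δ, by positivity, by positivity, ?_, ?_⟩) hrD
        · rw [← add_div, ← h, div_self hqs.ne']
        · ext i
          have := e i
          simp only [Pi.add_apply, Pi.smul_apply, smul_eq_mul]
          field_simp
          linear_combination -this - v i * h
      · have k1 : δ * z ≤ δ * x := by gcongr
        have k2 : b * x ≤ b * y := by gcongr
        have hx00 : x = 0 := by
          by_contra hne
          have : 0 < x := lt_of_le_of_ne hx0 (Ne.symm hne)
          nlinarith
        have hy00 : y = 0 := by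
          rw [hx00] at k1 k2 hzz hyx
          nlinarith
        have hm : m * δ = 0 := by
          have : m * δ = x * (s 1 - v 1) - y * (q 1 - v 1) := by
            rw [hx, hy, hδ]; simp only [cross, Pi.sub_apply]; ring
          rw [this, hx00, hy00]; ring
        have hn : n * δ = 0 := by
          have : n * δ = y * (q 0 - v 0) - x * (s 0 - v 0) := by
            rw [hx, hy, hδ]; simp only [cross, Pi.sub_apply]; ring
          rw [this, hx00, hy00]; ring
        have hm' : m = 0 := (mul_eq_zero.1 hm).resolve_right hqs.ne'
        have hn' : n = 0 := (mul_eq_zero.1 hn).resolve_right hqs.ne'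
        obtain ⟨c, hc⟩ := hC.int
        have := fC' c hc
        simp [hm', hn'] at this
    obtain ⟨p, hp1, hp2⟩ := mem_closure_iff.1 (hD.subset_closure hrD) _
      (isOpen_inTriangle v q s) ⟨hrs, hqr, hlt⟩
    exact ⟨p, hp2, hp1⟩
  · -- Here `r` lies on the side from `v` to `q`; the line through these points separates
    -- `A` from `D`, and `t` shows that `D` lies on the same side of it as `s`.
    rw [hqr] at e e0 e1
    have hlt : a < δ := by
      refine lt_of_le_of_ne hle fun h => hnot q hqA hqC ?_
      have : r = q := by
        ext i
        have := e i
        rw [h] at this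
        have := mul_left_cancel₀ hqs.ne' (this.trans (by ring :
          _ = δ * (q i - v i)))
        linarith
      rwa [← this]
    obtain ⟨m, n, fA, fD, fD'⟩ := exists_sep hA hD hAD hrA hrD
    have f1 := fA v hvA
    have f2 := fA q hqA
    have f3 := fD t htD
    simp only [Pi.sub_apply] at f1 f2 f3
    obtain ⟨x, hx⟩ : ∃ x, x = m * (q 0 - v 0) + n * (q 1 - v 1) := ⟨_, rfl⟩
    obtain ⟨z, hz⟩ : ∃ z, z = m * (r 0 - v 0) + n * (r 1 - v 1) := ⟨_, rfl⟩
    obtain ⟨w, hw⟩ : ∃ w, w = m * (t 0 - v 0) + n * (t 1 - v 1) := ⟨_, rfl⟩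
    have hzz : δ * z = a * x := by
      rw [hx, hz]; linear_combination m * e0 + n * e1
    have hz0 : 0 ≤ z := by linarith
    have hxz : x ≤ z := by linarith
    have hx0 : 0 ≤ x := by
      by_contra h
      push Not at h
      nlinarith
    have hx00 : x = 0 := by
      by_contra hne
      have : 0 < x := lt_of_le_of_ne hx0 (Ne.symm hne)
      nlinarith
    have hz00 : z = 0 := by
      rw [hx00, mul_zero] at hzz
      exact (mul_eq_zero.1 hzz).resolve_left hqs.ne'
    have hw0 : 0 ≤ w := by linarith
    have hside : ∀ p ∈ interior D, 0 < cross (q - v) (p - v) := by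
      intro p hp
      have g := fD' p hp
      simp only [Pi.sub_apply] at g
      have gp : 0 < m * (p 0 - v 0) + n * (p 1 - v 1) := by linarith
      have hid : cross (q - v) (t - v) * (m * (p 0 - v 0) + n * (p 1 - v 1)) =
          cross (p - v) (t - v) * x + cross (q - v) (p - v) * w := by
        rw [hx, hw]; simp only [cross, Pi.sub_apply]; ring
      rw [hx00, mul_zero, zero_add] at hid
      exact pos_of_mul_pos_left (hid ▸ mul_pos hqt gp) hw0
    have c1 : Continuous fun p : Fin 2 → ℝ => cross (p - v) (s - v) :=
      cross_cont (by fun_prop) (by fun_prop)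
    have c2 : Continuous fun p : Fin 2 → ℝ => cross (q - v) (p - v) :=
      cross_cont (by fun_prop) (by fun_prop)
    obtain ⟨p, ⟨hp1, hp2⟩, hp3⟩ := mem_closure_iff.1 (hD.subset_closure hrD)
      ({p | 0 < cross (p - v) (s - v)} ∩ {p | cross (p - v) (s - v) + cross (q - v) (p - v) < δ})
      ((isOpen_lt continuous_const c1).inter (isOpen_lt (c1.add c2) continuous_const))
      ⟨hrs, by change a + b < δ; linarith⟩
    exact ⟨p, hp3, hp1, hside p hp3, hp2⟩

/-- If `q, r` both come strictly before `s, t` in the positive angular order around `v`, one of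
the bodies `D ∋ r, t` and `C ∋ q, s` has an inner point inside a contact triangle. -/
lemma exists_mem_interior_triangle_or {A C D : Set (Fin 2 → ℝ)}
    (hA : IsBody A) (hC : IsBody C) (hD : IsBody D)
    (hAC : interior A ∩ interior C = ∅) (hAD : interior A ∩ interior D = ∅)
    (hACD : A ∩ C ∩ D = ∅) {v q r s t : Fin 2 → ℝ}
    (hvA : v ∈ A) (hqA : q ∈ A) (hqC : q ∈ C) (hrA : r ∈ A) (hrD : r ∈ D) (hsC : s ∈ C)
    (htD : t ∈ D) (hqs : 0 < cross (q - v) (s - v)) (hrs : 0 < cross (r - v) (s - v))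
    (hqt : 0 < cross (q - v) (t - v)) (hrt : 0 < cross (r - v) (t - v)) :
    (∃ p ∈ interior D, InTriangle v q s p) ∨ (∃ p ∈ interior C, InTriangle v r t p) := by
  have hADC : A ∩ D ∩ C = ∅ := by rw [Set.inter_right_comm]; exact hACD
  have hanti : cross (r - v) (q - v) = - cross (q - v) (r - v) := by simp only [cross]; ring
  have left := exists_mem_interior_triangle hA hC hD hAC hAD hACD hvA hqA hqC hrA hrD hsC htD
    hqs hrs hqt
  have right := exists_mem_interior_triangle hA hD hC hAD hAC hADC hvA hrA hrD hqA hqC htD hsC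
    hrt hqt hrs
  rcases lt_trichotomy (cross (q - v) (r - v)) 0 with h | h | h
  · exact Or.inr (right (Or.inl (by linarith)))
  · rcases le_total (cross (r - v) (s - v)) (cross (q - v) (s - v)) with h' | h'
    · exact Or.inl (left (Or.inr ⟨h, h'⟩))
    · refine Or.inr (right (Or.inr ⟨by linarith, ?_⟩))
      have hid : cross (q - v) (s - v) * cross (r - v) (t - v) =
          cross (r - v) (s - v) * cross (q - v) (t - v) +
            cross (q - v) (r - v) * cross (s - v) (t - v) := by
        simp only [cross]; ring
      rw [h, zero_mul, add_zero] at hid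
      by_contra hlt
      push Not at hlt
      nlinarith
  · exact Or.inl (left (Or.inl h))

/-- Two points `x ∈ A` and `y ∈ B` in the same open half-plane through `v ∈ A ∩ B` have
nonparallel directions, unless the nearer of them is a common point of `A` and `B`. -/
lemma cross_ne_zero {A B : Set (Fin 2 → ℝ)} (hA : Convex ℝ A) (hB : Convex ℝ B)
    {v x y : Fin 2 → ℝ} (hvA : v ∈ A) (hvB : v ∈ B) (hxA : x ∈ A) (hyB : y ∈ B)
    (hxB : x ∉ B) (hyA : y ∉ A) {g₀ g₁ : ℝ}
    (hgx : 0 < g₀ * (x - v) 0 + g₁ * (x - v) 1) (hgy : 0 < g₀ * (y - v) 0 + g₁ * (y - v) 1) :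
    cross (x - v) (y - v) ≠ 0 := by
  intro h0
  set X := g₀ * (x - v) 0 + g₁ * (x - v) 1 with hX
  set Y := g₀ * (y - v) 0 + g₁ * (y - v) 1 with hY
  have e : ∀ i, X * (y i - v i) = Y * (x i - v i) := by
    simp only [cross, Pi.sub_apply] at h0
    intro i
    fin_cases i <;> simp only [hX, hY, Pi.sub_apply, Fin.zero_eta, Fin.mk_one]
    · linear_combination (-g₁) * h0
    · linear_combination g₀ * h0
  rcases le_total X Y with h | h
  · refine hxB (hB.segment_subset hvB hyB ⟨1 - X / Y, X / Y, ?_, by positivity, by ring, ?_⟩)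
    · rw [sub_nonneg, div_le_one hgy]; exact h
    · ext i
      have := e i
      simp only [Pi.add_apply, Pi.smul_apply, smul_eq_mul]
      field_simp
      linarith
  · refine hyA (hA.segment_subset hvA hxA ⟨1 - Y / X, Y / X, ?_, by positivity, by ring, ?_⟩)
    · rw [sub_nonneg, div_le_one hgx]; exact h
    · ext i
      have := e i
      simp only [Pi.add_apply, Pi.smul_apply, smul_eq_mul]
      field_simp
      linarith

/-! ### Surrounding -/

/-- A body `K l` with an inner point inside the contact triangle of the other three bodies is
surrounded by them. -/
lemma surrounded {K : Fin 4 → Set (Fin 2 → ℝ)} (hK : ∀ i, IsBody (K i))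
    (hint : ∀ i j, i ≠ j → interior (K i) ∩ interior (K j) = ∅) {i j k l : Fin 4}
    (hil : i ≠ l) (hjl : j ≠ l) (hkl : k ≠ l) {v q s : Fin 2 → ℝ}
    (hvi : v ∈ K i) (hvj : v ∈ K j) (hqi : q ∈ K i) (hqk : q ∈ K k) (hsj : s ∈ K j)
    (hsk : s ∈ K k) (h : ∃ p ∈ interior (K l), InTriangle v q s p) :
    ∃ i : Fin 4, ∃ x ∈ (⋃ j ∈ ({j | j ≠ i} : Set (Fin 4)), K j)ᶜ,
      Bornology.IsBounded
        (connectedComponentIn (⋃ j ∈ ({j | j ≠ i} : Set (Fin 4)), K j)ᶜ x) ∧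
      K i ⊆ closure
        (connectedComponentIn (⋃ j ∈ ({j | j ≠ i} : Set (Fin 4)), K j)ᶜ x) := by
  obtain ⟨p, hp, hpT⟩ := h
  have hsub : interior (K l) ⊆ (⋃ j ∈ ({j | j ≠ l} : Set (Fin 4)), K j)ᶜ := by
    intro x hx hx'
    simp only [Set.mem_iUnion] at hx'
    obtain ⟨m, hm, hxm⟩ := hx'
    have : x ∈ interior (K l) ∩ K m := ⟨hx, hxm⟩
    rw [(hK m).disjoint_interior (hint l m (Ne.symm hm))] at this
    exact this
  have hout : ∀ m, m ≠ l → K m ⊆ (⋃ j ∈ ({j | j ≠ l} : Set (Fin 4)), K j)ᶜᶜ := by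
    intro m hm
    rw [compl_compl]
    exact Set.subset_biUnion_of_mem (u := K) hm
  refine ⟨l, p, hsub hp, isBounded_component
    (((hK i).convex.segment_subset hvi hqi).trans (hout i hil))
    (((hK j).convex.segment_subset hvj hsj).trans (hout j hjl))
    (((hK k).convex.segment_subset hqk hsk).trans (hout k hkl)) hpT (hsub hp), ?_⟩
  exact (hK l).subset_closure.trans (closure_mono
    ((hK l).convex.interior.isPreconnected.subset_connectedComponentIn hp hsub))

/-- If four planar convex bodies pairwise touch and no point belongs to three
of them, then one of them lies in the internal region surrounded by the other
three, i.e. in the closure of a bounded connected component of the complement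
of the union of the other three. -/
theorem stmt12 (K : Fin 4 → Set (Fin 2 → ℝ))
    (hKcomp : ∀ i, IsCompact (K i)) (hKconv : ∀ i, Convex ℝ (K i))
    (hKint : ∀ i, (interior (K i)).Nonempty)
    (htouch : ∀ i j : Fin 4, i ≠ j →
      (K i ∩ K j).Nonempty ∧ interior (K i) ∩ interior (K j) = ∅)
    (htriple : ∀ i j k : Fin 4, i ≠ j → j ≠ k → i ≠ k →
      K i ∩ K j ∩ K k = ∅) :
    ∃ i : Fin 4, ∃ x ∈ (⋃ j ∈ ({j | j ≠ i} : Set (Fin 4)), K j)ᶜ,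
      Bornology.IsBounded
        (connectedComponentIn (⋃ j ∈ ({j | j ≠ i} : Set (Fin 4)), K j)ᶜ x) ∧
      K i ⊆ closure
        (connectedComponentIn (⋃ j ∈ ({j | j ≠ i} : Set (Fin 4)), K j)ᶜ x) := by
  have hK : ∀ i, IsBody (K i) := fun i => ⟨hKcomp i, hKconv i, hKint i⟩
  have hint : ∀ i j, i ≠ j → interior (K i) ∩ interior (K j) = ∅ := fun i j h => (htouch i j h).2
  have hno : ∀ {x} (i j k : Fin 4), i ≠ j → j ≠ k → i ≠ k → x ∈ K i → x ∈ K j → x ∉ K k := by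
    intro x i j k h1 h2 h3 a b c
    have : x ∈ K i ∩ K j ∩ K k := ⟨⟨a, b⟩, c⟩
    rw [htriple i j k h1 h2 h3] at this
    exact this
  have hex : ∀ i j : Fin 4, ∃ x, i ≠ j → x ∈ K i ∧ x ∈ K j := by
    intro i j
    by_cases h : i = j
    · exact ⟨0, fun h' => (h' h).elim⟩
    · obtain ⟨x, hx⟩ := (htouch i j h).1
      exact ⟨x, fun _ => hx⟩
  choose c hc using hex
  obtain ⟨⟨i, j⟩, hij, hmax⟩ := Finset.exists_max_image
    (Finset.univ.filter fun w : Fin 4 × Fin 4 => w.1 ≠ w.2)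
    (fun w => c w.1 w.2 0 ^ 2 + c w.1 w.2 1 ^ 2) ⟨(0, 1), by simp⟩
  simp only [Finset.mem_filter, Finset.mem_univ, true_and] at hij hmax
  obtain ⟨k, l, hik, hil, hjk, hjl, hkl⟩ :
      ∃ k l : Fin 4, i ≠ k ∧ i ≠ l ∧ j ≠ k ∧ j ≠ l ∧ k ≠ l := by
    clear hmax
    revert i j
    decide
  obtain ⟨hvi, hvj⟩ := hc i j hij
  obtain ⟨hqi, hqk⟩ := hc i k hik
  obtain ⟨hri, hrl⟩ := hc i l hil
  obtain ⟨hsj, hsk⟩ := hc j k hjk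
  obtain ⟨htj, htl⟩ := hc j l hjl
  have mq := hmax (i, k) hik
  have mr := hmax (i, l) hil
  have ms := hmax (j, k) hjk
  have mt := hmax (j, l) hjl
  dsimp only at mq mr ms mt
  generalize c i j = v at *
  generalize c i k = q at *
  generalize c i l = r at *
  generalize c j k = s at *
  generalize c j l = t at *
  -- The line through `v` orthogonal to `v` has all other contact points on its inner side.
  have hg : ∀ x : Fin 2 → ℝ, x 0 ^ 2 + x 1 ^ 2 ≤ v 0 ^ 2 + v 1 ^ 2 → x ≠ v →
      0 < -v 0 * (x - v) 0 + -v 1 * (x - v) 1 := by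
    intro x hx hne
    simp only [Pi.sub_apply]
    by_contra hcon
    have h0 : (x 0 - v 0) ^ 2 + (x 1 - v 1) ^ 2 ≤ 0 := by nlinarith
    apply hne
    ext m
    fin_cases m <;> simp only [Fin.zero_eta, Fin.mk_one] <;>
      nlinarith [sq_nonneg (x 0 - v 0), sq_nonneg (x 1 - v 1)]
  have gq := hg q mq fun h => hno i j k hij hjk hik hvi hvj (h ▸ hqk)
  have gr := hg r mr fun h => hno i j l hij hjl hil hvi hvj (h ▸ hrl)
  have gs := hg s ms fun h => hno i j k hij hjk hik hvi hvj (h ▸ hsk)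
  have gt := hg t mt fun h => hno i j l hij hjl hil hvi hvj (h ▸ htl)
  have cne : ∀ x ∈ K i, ∀ y ∈ K j, x ∉ K j → y ∉ K i →
      0 < -v 0 * (x - v) 0 + -v 1 * (x - v) 1 → 0 < -v 0 * (y - v) 0 + -v 1 * (y - v) 1 →
      cross (x - v) (y - v) ≠ 0 := fun x hx y hy hx' hy' h h' =>
    cross_ne_zero (hKconv i) (hKconv j) hvi hvj hx hy hx' hy' h h'
  have hqj : q ∉ K j := hno i k j hik hjk.symm hij hqi hqk
  have hrj : r ∉ K j := hno i l j hil hjl.symm hij hri hrl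
  have hsi : s ∉ K i := hno j k i hjk hik.symm hij.symm hsj hsk
  have hti : t ∉ K i := hno j l i hjl hil.symm hij.symm htj htl
  obtain ⟨m, n, fi, fj, fj'⟩ := exists_sep (hK i) (hK j) (hint i j hij) hvi hvj
  -- `W` is the orientation of the coordinate system given by the separating functional and `-v`.
  obtain ⟨W, hW⟩ : ∃ W, W = n * v 0 - m * v 1 := ⟨_, rfl⟩
  have hsign : ∀ x ∈ K i, ∀ y ∈ K j,
      0 < -v 0 * (x - v) 0 + -v 1 * (x - v) 1 → 0 < -v 0 * (y - v) 0 + -v 1 * (y - v) 1 →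
      W * cross (x - v) (y - v) ≤ 0 := by
    intro x hx y hy h h'
    have : W * cross (x - v) (y - v) =
        (m * (x - v) 0 + n * (x - v) 1) * (-v 0 * (y - v) 0 + -v 1 * (y - v) 1) -
        (m * (y - v) 0 + n * (y - v) 1) * (-v 0 * (x - v) 0 + -v 1 * (x - v) 1) := by
      rw [hW]; simp only [cross]; ring
    rw [this]
    have h1 := mul_nonneg (neg_nonneg.2 (fi x hx)) h'.le
    have h2 := mul_nonneg (fj y hy) h.le
    linarith
  have hW0 : W ≠ 0 := by
    intro h0
    -- The separating functional would be a multiple of `-v`, hence zero by the signs at `q`, `s`.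
    have h1 := mul_nonneg (neg_nonneg.2 (fi q hqi)) gs.le
    have h2 := mul_nonneg (fj s hsj) gq.le
    have h3 : (m * (q - v) 0 + n * (q - v) 1) * (-v 0 * (s - v) 0 + -v 1 * (s - v) 1) -
        (m * (s - v) 0 + n * (s - v) 1) * (-v 0 * (q - v) 0 + -v 1 * (q - v) 1) = 0 := by
      have : W * cross (q - v) (s - v) = 0 := by rw [h0, zero_mul]
      rw [← this, hW]; simp only [cross]; ring
    have h4 : (m * (q - v) 0 + n * (q - v) 1) * (-v 0 * (s - v) 0 + -v 1 * (s - v) 1) = 0 := by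
      linarith
    have hf : m * (q - v) 0 + n * (q - v) 1 = 0 := (mul_eq_zero.1 h4).resolve_right gs.ne'
    have hW' : n * v 0 - m * v 1 = 0 := hW ▸ h0
    have hm : m * (-v 0 * (q - v) 0 + -v 1 * (q - v) 1) = 0 := by
      linear_combination (q - v) 1 * hW' - v 0 * hf
    have hn : n * (-v 0 * (q - v) 0 + -v 1 * (q - v) 1) = 0 := by
      linear_combination -(q - v) 0 * hW' - v 1 * hf
    have hm' := (mul_eq_zero.1 hm).resolve_right gq.ne'
    have hn' := (mul_eq_zero.1 hn).resolve_right gq.ne'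
    obtain ⟨b, hb⟩ := hKint j
    have := fj' b hb
    simp [hm', hn'] at this
  rcases lt_or_gt_of_ne hW0 with hneg | hpos
  · have hcr : ∀ x ∈ K i, ∀ y ∈ K j, x ∉ K j → y ∉ K i →
        0 < -v 0 * (x - v) 0 + -v 1 * (x - v) 1 → 0 < -v 0 * (y - v) 0 + -v 1 * (y - v) 1 →
        0 < cross (x - v) (y - v) := by
      intro x hx y hy hx' hy' h h'
      have h1 := hsign x hx y hy h h'
      refine lt_of_le_of_ne ?_ (cne x hx y hy hx' hy' h h').symm
      by_contra hlt
      nlinarith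
    rcases exists_mem_interior_triangle_or (hK i) (hK k) (hK l) (hint i k hik) (hint i l hil)
      (htriple i k l hik hkl hil) hvi hqi hqk hri hrl hsk htl
      (hcr q hqi s hsj hqj hsi gq gs) (hcr r hri s hsj hrj hsi gr gs)
      (hcr q hqi t htj hqj hti gq gt) (hcr r hri t htj hrj hti gr gt) with h | h
    · exact surrounded hK hint hil hjl hkl hvi hvj hqi hqk hsj hsk h
    · exact surrounded hK hint hik hjk hkl.symm hvi hvj hri hrl htj htl h
  · have hcr : ∀ x ∈ K i, ∀ y ∈ K j, x ∉ K j → y ∉ K i →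
        0 < -v 0 * (x - v) 0 + -v 1 * (x - v) 1 → 0 < -v 0 * (y - v) 0 + -v 1 * (y - v) 1 →
        0 < cross (y - v) (x - v) := by
      intro x hx y hy hx' hy' h h'
      have h1 := hsign x hx y hy h h'
      have h2 : cross (y - v) (x - v) = - cross (x - v) (y - v) := by simp only [cross]; ring
      rw [h2]
      refine lt_of_le_of_ne ?_ (neg_ne_zero.2 (cne x hx y hy hx' hy' h h')).symm
      by_contra hlt
      nlinarith
    rcases exists_mem_interior_triangle_or (hK j) (hK k) (hK l) (hint j k hjk) (hint j l hjl)
      (htriple j k l hjk hkl hjl) hvj hsj hsk htj htl hqk hrl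
      (hcr q hqi s hsj hqj hsi gq gs) (hcr q hqi t htj hqj hti gq gt)
      (hcr r hri s hsj hrj hsi gr gs) (hcr r hri t htj hrj hti gr gt) with h | h
    · exact surrounded hK hint hjl hil hkl hvj hvi hsj hsk hqi hqk h
    · exact surrounded hK hint hjk hik hkl.symm hvj hvi htj htl hri hrl h
end
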